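/- Fix π̃ ∈ Π̃ and suppose Q ≪ P_0 is a probability measure invariant for the environment kernel R_{π̃}. If A = {ω : dQ/dP_0(ω) > 0}, then A is invariant under the kernel R_π of the simple random walk on the cluster (if ω_1 is sampled from P_0(·|A) and then ω_2 from π(ω_1,·), then ω_2 ∈ A almost surely), and hence, by ergodicity of P_0 for R_π, P_0(A) = 1, i.e. Q and P_0 are mutually absolutely continuous. -/

import Mathlib

open MeasureTheory ProbabilityTheory Filter Topology
open scoped ENNReal NNReal BigOperators

noncomputable section

namespace SRWPC

/-- Vertices of the lattice `ℤ^d`. -/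
abbrev V (d : ℕ) := Fin d → ℤ

/-- Index of a nearest-neighbour bond: the bond from `x` to `x + eᵢ`. -/
abbrev EdgeIx (d : ℕ) := V d × Fin d

/-- Percolation configurations `Ω = {0,1}^{𝔹_d}`. -/
abbrev Config (d : ℕ) := EdgeIx d → Bool

/-- The `i`-th coordinate unit vector. -/
def unitVec (d : ℕ) (i : Fin d) : V d := fun j => if j = i then 1 else 0

/-- The set `𝕌_d` of the `2d` unit vectors. -/
def Ud (d : ℕ) : Finset (V d) :=
  (Finset.univ.image (unitVec d)) ∪ (Finset.univ.image (fun i => -unitVec d i))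

/-- The type of nearest-neighbour steps (elements of `𝕌_d`). -/
abbrev Step (d : ℕ) := {e : V d // e ∈ Ud d}

/-- The shift `(τ_x ω)_b = ω_{x+b}`. -/
def shift {d : ℕ} (x : V d) (ω : Config d) : Config d := fun b => ω (b.1 + x, b.2)

/-- The bond from `x` to `x + e` is open in `ω`. -/
def edgeOpen {d : ℕ} (ω : Config d) (x e : V d) : Prop :=
  ∃ i : Fin d, (e = unitVec d i ∧ ω (x, i) = true) ∨
    (e = -unitVec d i ∧ ω (x - unitVec d i, i) = true)

open Classical in
/-- The number of open bonds incident to `x`. -/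
def openDeg {d : ℕ} (ω : Config d) (x : V d) : ℕ :=
  ((Ud d).filter (fun e => edgeOpen ω x e)).card

open Classical in
/-- The transition probability `π_ω(x,e)` of the simple random walk on the cluster. -/
def trans {d : ℕ} (ω : Config d) (x e : V d) : ℝ :=
  if edgeOpen ω x e then 1 / openDeg ω x else 0

/-- `γ` restricted to `{0,…,n}` is a nearest-neighbour open path in `ω`. -/
def IsOpenPath {d : ℕ} (ω : Config d) (γ : ℕ → V d) (n : ℕ) : Prop :=
  ∀ k < n, (γ (k + 1) - γ k) ∈ Ud d ∧ edgeOpen ω (γ k) (γ (k + 1) - γ k)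

/-- `x` lies in the box `[-r,r]^d`. -/
def inBox {d : ℕ} (x : V d) (r : ℝ) : Prop := ∀ i, |(x i : ℝ)| ≤ r

/-- `x` is joined to infinity by a nearest-neighbour open path, i.e. `x ∈ 𝒞_∞(ω)`. -/
def memCluster {d : ℕ} (ω : Config d) (x : V d) : Prop :=
  ∀ R : ℕ, ∃ (γ : ℕ → V d) (n : ℕ), γ 0 = x ∧ IsOpenPath ω γ n ∧ ¬ inBox (γ n) R

/-- The event `Ω_0 = {0 ∈ 𝒞_∞}`. -/
def cluZero (d : ℕ) : Set (Config d) := {ω | memCluster ω 0}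

/-- `P` is the Bernoulli bond percolation product measure with parameter `q`. -/
def IsBernoulli (d : ℕ) (q : ℝ) (P : Measure (Config d)) : Prop :=
  IsProbabilityMeasure P ∧
    ∀ (F : Finset (EdgeIx d)) (a : EdgeIx d → Bool),
      P {ω | ∀ b ∈ F, ω b = a b} = ∏ b ∈ F, ENNReal.ofReal (if a b then q else 1 - q)

/-- The critical probability `p_c(d)` of bond percolation on `ℤ^d`. -/
def pc (d : ℕ) : ℝ :=
  sInf {q : ℝ | q ∈ Set.Icc (0 : ℝ) 1 ∧
    ∀ P : Measure (Config d), IsBernoulli d q P → 0 < P (cluZero d)}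

variable {d : ℕ}

/-- Position of the walk after `k` steps, given the sequence of steps `s`. -/
def pos {n : ℕ} (s : Fin n → Step d) (k : ℕ) : V d :=
  ∑ j ∈ Finset.univ.filter (fun j : Fin n => (j : ℕ) < k), (s j).1

/-- The environment/step pair `(τ_{X_k} ω, X_{k+1} - X_k)` seen at time `k`. -/
def envPair (ω : Config d) {n : ℕ} (s : Fin n → Step d) (k : Fin n) : Config d × Step d :=
  (shift (pos s k) ω, s k)

/-- Quenched probability of a given sequence of `n` steps under the Markov kernel `κ`. -/
def pathProb (κ : Config d → Step d → ℝ) (ω : Config d) {n : ℕ} (s : Fin n → Step d) : ℝ :=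
  ∏ k : Fin n, κ (shift (pos s k) ω) (s k)

/-- The SRWPC transition kernel `π`. -/
def srw (d : ℕ) : Config d → Step d → ℝ := fun ω e => trans ω 0 e.1

/-- Quenched expectation (under `P_0^{κ,ω}`) of a functional of the first `n` steps. -/
def qE (κ : Config d → Step d → ℝ) (ω : Config d) {n : ℕ} (F : (Fin n → Step d) → ℝ) : ℝ :=
  ∑ s : Fin n → Step d, pathProb κ ω s * F s

/-- Quenched probability (under `P_0^{κ,ω}`) of a set of `n`-step trajectories. -/
def qP (κ : Config d → Step d → ℝ) (ω : Config d) {n : ℕ} (A : Set (Fin n → Step d)) : ℝ :=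
  ∑ s : Fin n → Step d, A.indicator (fun s' => pathProb κ ω s') s

/-- Quenched probability, `ℝ≥0∞`-valued. -/
def qPE (κ : Config d → Step d → ℝ) (ω : Config d) {n : ℕ} (A : Set (Fin n → Step d)) : ℝ≥0∞ :=
  ENNReal.ofReal (qP κ ω A)

/-- The environment-step space `Ω_0 × 𝕌_d`. -/
abbrev EnvSp (d : ℕ) := Config d × Step d

/-- The pair empirical measure `ℒ_n` as a measure. -/
def empMeas (ω : Config d) {n : ℕ} (s : Fin n → Step d) : Measure (EnvSp d) :=
  (n : ℝ≥0∞)⁻¹ • ∑ k : Fin n, Measure.dirac (envPair ω s k)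

lemma empMeas_isProb (ω : Config d) {n : ℕ} (hn : n ≠ 0) (s : Fin n → Step d) :
    IsProbabilityMeasure (empMeas ω s) := by
  constructor
  simp only [empMeas, Measure.smul_apply, Measure.coe_finset_sum, Finset.sum_apply,
    Measure.dirac_apply_of_mem (Set.mem_univ _), smul_eq_mul]
  rw [Finset.sum_const, Finset.card_univ, Fintype.card_fin, nsmul_eq_mul, mul_one,
    ENNReal.inv_mul_cancel]
  · exact_mod_cast hn
  · exact ENNReal.natCast_ne_top n

/-- The pair empirical measure `ℒ_{n+1}` as a probability measure. -/
def empPM (ω : Config d) {n : ℕ} (s : Fin (n + 1) → Step d) : ProbabilityMeasure (EnvSp d) :=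
  ⟨empMeas ω s, empMeas_isProb ω (Nat.succ_ne_zero n) s⟩

/-- First marginal `(μ)_1` of a measure on `Ω_0 × 𝕌_d`. -/
def marg1 (μ : Measure (EnvSp d)) : Measure (Config d) := μ.map Prod.fst

/-- Second marginal `(μ)_2` of a measure on `Ω_0 × 𝕌_d`. -/
def marg2 (μ : Measure (EnvSp d)) : Measure (Config d) := μ.map (fun q => shift q.2.1 q.1)

/-- The slice `dμ(·, e)` of a measure on `Ω_0 × 𝕌_d` at a fixed step `e`. -/
def slice (μ : Measure (EnvSp d)) (e : Step d) : Measure (Config d) :=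
  (μ.restrict (Set.univ ×ˢ {e})).map Prod.fst

/-- The space `ℳ_1⋆`: probability measures on `Ω_0 × 𝕌_d` whose two marginals coincide and
are absolutely continuous w.r.t. `P₀`, and whose densities `dμ(ω,e)/d(μ)_1(ω)` are positive
precisely on open edges, `P₀`-a.s. -/
def M1star (d : ℕ) (P₀ : Measure (Config d)) : Set (ProbabilityMeasure (EnvSp d)) :=
  {μ | marg1 μ.toMeasure = marg2 μ.toMeasure ∧ marg1 μ.toMeasure ≪ P₀ ∧
    ∃ ρ : Step d → Config d → ℝ≥0∞, (∀ e, Measurable (ρ e)) ∧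
      (∀ e, slice μ.toMeasure e = (marg1 μ.toMeasure).withDensity (ρ e)) ∧
      (∀ e : Step d, ∀ᵐ ω ∂P₀, (0 < ρ e ω ↔ edgeOpen ω 0 e.1))}

/-- The reference measure `π_ω(0,e) d(μ)_1(ω)` on `Ω_0 × 𝕌_d`. -/
def refM (μ : Measure (EnvSp d)) : Measure (EnvSp d) :=
  Measure.sum (fun e : Step d =>
    ((marg1 μ).withDensity (fun ω => ENNReal.ofReal (trans ω 0 e.1))).map (fun ω => (ω, e)))

/-- `x log x - x + 1`. -/
def klFun (x : ℝ) : ℝ := x * Real.log x - x + 1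

open Classical in
/-- The entropy functional `ℑ` (a relative entropy with respect to `refM μ`;
it equals `∫ Σ_e dμ(ω,e) log[dμ(ω,e) / (d(μ)_1(ω) π_ω(0,e))]` on `ℳ_1⋆` and `∞` otherwise). -/
def entI (P₀ : Measure (Config d)) (μ : ProbabilityMeasure (EnvSp d)) : ℝ≥0∞ :=
  if μ ∈ M1star d P₀ ∧ μ.toMeasure ≪ refM μ.toMeasure then
    ∫⁻ q, ENNReal.ofReal (klFun ((μ.toMeasure.rnDeriv (refM μ.toMeasure)) q).toReal)
      ∂(refM μ.toMeasure)
  else ∞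

/-- The pairing `⟨f, μ⟩`. -/
def pairing (f : EnvSp d → ℝ) (μ : ProbabilityMeasure (EnvSp d)) : ℝ :=
  ∫ q, f q ∂μ.toMeasure

/-- The Fenchel–Legendre transform `ℑ⋆` of `ℑ`. -/
def entIstar (P₀ : Measure (Config d)) (f : BoundedContinuousFunction (EnvSp d) ℝ) : EReal :=
  ⨆ μ : ProbabilityMeasure (EnvSp d),
    ((pairing f μ : ℝ) : EReal) - ((entI P₀ μ : ℝ≥0∞) : EReal)

/-- The double Fenchel–Legendre transform `ℑ⋆⋆` of `ℑ`. -/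
def entIbis (P₀ : Measure (Config d)) (μ : ProbabilityMeasure (EnvSp d)) : EReal :=
  ⨆ f : BoundedContinuousFunction (EnvSp d) ℝ,
    ((pairing f μ : ℝ) : EReal) - entIstar P₀ f

/-- The contraction map `ξ(μ) = ∫ Σ_e e dμ(ω,e)`. -/
def xi (μ : ProbabilityMeasure (EnvSp d)) : Fin d → ℝ :=
  fun i => ∫ q, ((q.2.1 i : ℤ) : ℝ) ∂μ.toMeasure

/-- The mean velocity `X_n / n` of a trajectory. -/
def meanVel {n : ℕ} (s : Fin n → Step d) : Fin d → ℝ :=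
  fun i => (n : ℝ)⁻¹ * ((pos s n) i : ℝ)

/-- The class `Π̃` of environment transition kernels. -/
def PiT (d : ℕ) (P₀ : Measure (Config d)) : Set (Config d → Step d → ℝ) :=
  {κ | (∀ e : Step d, Measurable (fun ω => κ ω e)) ∧
    (∀ ω e, 0 ≤ κ ω e) ∧ (∀ e : Step d, ∀ᵐ ω ∂P₀, κ ω e ≤ 1) ∧
    (∀ᵐ ω ∂P₀, ∑ e : Step d, κ ω e = 1) ∧
    (∀ e : Step d, ∀ᵐ ω ∂P₀, (κ ω e = 0 ↔ trans ω 0 e.1 = 0))}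

/-- `φ dP₀` is an invariant probability density for the kernel `κ`. -/
def IsInvDensity (P₀ : Measure (Config d)) (κ : Config d → Step d → ℝ)
    (φ : Config d → ℝ) : Prop :=
  Measurable φ ∧ (∀ ω, 0 ≤ φ ω) ∧ (∫ ω, φ ω ∂P₀) = 1 ∧
    (∀ᵐ ω ∂P₀, φ ω = ∑ e : Step d, κ (shift (-e.1) ω) e * φ (shift (-e.1) ω))

/-- The set `ℰ` of pairs `(π̃, φ)`. -/
def Epairs (d : ℕ) (P₀ : Measure (Config d)) :
    Set ((Config d → Step d → ℝ) × (Config d → ℝ)) :=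
  {q | q.1 ∈ PiT d P₀ ∧ IsInvDensity P₀ q.1 q.2}

/-- The measure `dμ(ω,e) = π̃(ω,e) φ(ω) dP₀(ω)` associated with a pair `(π̃, φ)`. -/
def pairMeasure (P₀ : Measure (Config d)) (κ : Config d → Step d → ℝ)
    (φ : Config d → ℝ) : Measure (EnvSp d) :=
  Measure.sum (fun e : Step d =>
    (P₀.withDensity (fun ω => ENNReal.ofReal (κ ω e * φ ω))).map (fun ω => (ω, e)))

/-- The kernel `dμ/d(μ)_1` associated with a measure on `Ω_0 × 𝕌_d`. -/
def toKappa (μ : Measure (EnvSp d)) : Config d → Step d → ℝ :=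
  fun ω e => ((slice μ e).rnDeriv (marg1 μ) ω).toReal

/-- The density `d(μ)_1/dP₀` associated with a measure on `Ω_0 × 𝕌_d`. -/
def toPhi (P₀ : Measure (Config d)) (μ : Measure (EnvSp d)) : Config d → ℝ :=
  fun ω => ((marg1 μ).rnDeriv P₀ ω).toReal

/-- The environment Markov transition operator `R_κ`. -/
def kernelStep (κ : Config d → Step d → ℝ) (f : Config d → ℝ) : Config d → ℝ :=
  fun ω => ∑ e : Step d, κ ω e * f (shift e.1 ω)

/-- `Q` is an invariant measure for the environment kernel `R_κ`. -/
def IsInvariant (κ : Config d → Step d → ℝ) (Q : Measure (Config d)) : Prop :=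
  ∀ f : Config d → ℝ, Measurable f → (∃ C, ∀ ω, |f ω| ≤ C) →
    ∫ ω, kernelStep κ f ω ∂Q = ∫ ω, f ω ∂Q

/-- Partial sum `Σ_{k<m} f(τ_{X_k}ω, X_{k+1}-X_k)` along a trajectory of length `N`. -/
def partialSumF (f : EnvSp d → ℝ) (ω : Config d) {N : ℕ} (s : Fin N → Step d) (m : ℕ) : ℝ :=
  ∑ k ∈ Finset.univ.filter (fun k : Fin N => (k : ℕ) < m), f (envPair ω s k)

/-- The sum of `G` along the path `γ` up to time `n`. -/
def pathSum (G : Config d → V d → ℝ) (ω : Config d) (γ : ℕ → V d) (n : ℕ) : ℝ :=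
  ∑ k ∈ Finset.range n, G (shift (γ k) ω) (γ (k + 1) - γ k)

/-- The class `𝒢_∞` of gradients: zero mean, uniformly bounded, closed loops. -/
def Ginfty (d : ℕ) (P₀ : Measure (Config d)) : Set (Config d → V d → ℝ) :=
  {G | (∀ e ∈ Ud d, Measurable (fun ω => G ω e)) ∧
    (∀ e ∈ Ud d, ∫ ω, G ω e ∂P₀ = 0) ∧
    (∃ M : ℝ, ∀ e ∈ Ud d, ∀ᵐ ω ∂P₀, |G ω e| ≤ M) ∧
    (∀ᵐ ω ∂P₀, ∀ (γ : ℕ → V d) (n : ℕ),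
      memCluster ω (γ 0) → IsOpenPath ω γ n → γ n = γ 0 → pathSum G ω γ n = 0)}

open Classical in
/-- The corrector `Ψ(ω,x)`: the sum of `G` along some open path from `0` to `x`. -/
def corr (G : Config d → V d → ℝ) (ω : Config d) (x : V d) : ℝ :=
  if h : ∃ q : (ℕ → V d) × ℕ, q.1 0 = 0 ∧ q.1 q.2 = x ∧ IsOpenPath ω q.1 q.2
  then pathSum G ω h.choose.1 h.choose.2 else 0

/-- The chemical distance: minimal length of an open path joining `x` and `y`. -/
def chemDist (ω : Config d) (x y : V d) : ℕ :=
  sInf {n : ℕ | ∃ γ : ℕ → V d, γ 0 = x ∧ γ n = y ∧ IsOpenPath ω γ n}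

open Classical in
/-- The functional `Λ(f,G)`. -/
def Lam (P₀ : Measure (Config d)) (f : EnvSp d → ℝ) (G : Config d → V d → ℝ) : EReal :=
  essSup (fun ω => ((Real.log (∑ e : Step d,
    if edgeOpen ω 0 e.1 then trans ω 0 e.1 * Real.exp (f (ω, e) + G ω e.1) else 0)) : EReal)) P₀

/-- The variational formula `H̄(f) = sup_{μ ∈ ℳ_1⋆} {⟨f,μ⟩ - ℑ(μ)}`. -/
def Hbar (P₀ : Measure (Config d)) (f : EnvSp d → ℝ) : EReal :=
  ⨆ μ ∈ M1star d P₀, ((pairing f μ : ℝ) : EReal) - ((entI P₀ μ : ℝ≥0∞) : EReal)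

/-- The finite σ-algebra `𝓑_k` recording all bonds in the box of size `k` around the origin. -/
def Bsig (d k : ℕ) : MeasurableSpace (Config d) :=
  MeasurableSpace.comap
    (fun (ω : Config d) (b : {b : EdgeIx d // ∀ i, |b.1 i| ≤ (k : ℤ)}) => ω b.1) inferInstance

end SRWPC

/-!
Let `A` be the set where the density of `Q` is positive. Testing the invariance of `Q` on the
indicator of `Aᶜ` shows that almost surely no step allowed by the kernel leaves `A`, so `A` is
closed under open steps. If the infinite cluster is unique, a single vertex of it from which the
environment is seen in `A` then forces all of them to be such, in particular the origin; and the
existence of such a vertex is a shift invariant event, of probability `0` or `1` since bonds are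
independent.

For uniqueness, look at the bonds of a finite box and let `B` be its boundary. For a set `T` of
bonds write `M(T) = ∑ b ∈ T, (p - ω b)`. A bond between two distinct clusters meeting `B` is closed
and touches both of them, but it is counted once among the bonds touching the union of these
clusters. Hence summing `M` over the clusters meeting `B` and subtracting `M` of their union gives
`p` times the number of such bonds. Exploring a cluster only inspects the bonds touching it, which
therefore form a spatial stopping set `T`, and the likelihood ratio `∏ b ∈ T, (1 + δ * (p - ω b))`
has mean one. Since it is at least `δ * M(T) - 2 * δ ^ 2 * #T`, taking `δ = ε` for the clusters and
`δ = -ε` for their union bounds the expected number of such bonds by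
`(6 * ε ^ 2 * volume + boundary + 1) / (ε * p)`. Dividing by the volume, letting the box grow and
then `ε → 0`, almost surely no bond joins two distinct infinite clusters; as opening a bond maps the
percolation law to an absolutely continuous one, this extends from neighbours to all pairs of
vertices.
-/

open scoped Finset

namespace BondPercolation

section ProductMeasure

variable {ι α : Type*} [MeasurableSpace α]

theorem infinitePi_eq_of_cylinder_eq [Countable α] [MeasurableSingletonClass α] {ν : Measure α}
    [IsProbabilityMeasure ν] {P : Measure (ι → α)}
    (hP : ∀ (F : Finset ι) (a : ι → α), P {ω | ∀ b ∈ F, ω b = a b} = ∏ b ∈ F, ν {a b}) :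
    P = Measure.infinitePi fun _ : ι => ν := by
  refine IsProjectiveLimit.unique (fun F => ?_) (Measure.isProjectiveLimit_infinitePi _)
  refine Measure.ext_of_singleton fun a => ?_
  have hα : Nonempty α := ν.nonempty_of_neZero
  obtain ⟨a, rfl⟩ : ∃ a' : ι → α, F.restrict a' = a :=
    Subtype.val_injective.surjective_comp_right a
  have hcylinder : F.restrict (π := fun _ => α) ⁻¹' {F.restrict a} =
      {ω | ∀ b ∈ F, ω b = a b} := by
    ext ω
    simp [funext_iff]
  rw [Measure.map_apply (by fun_prop) (measurableSet_singleton _), hcylinder, hP,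
    Measure.pi_singleton, ← Finset.prod_coe_sort]
  rfl

theorem measurePreserving_comp_equiv_infinitePi (ν : Measure α) [IsProbabilityMeasure ν]
    (e : ι ≃ ι) : MeasurePreserving (fun (ω : ι → α) b => ω (e b))
      (Measure.infinitePi fun _ : ι => ν) (Measure.infinitePi fun _ : ι => ν) := by
  refine ⟨by fun_prop, ?_⟩
  have h := Measure.infinitePi_map_piCongrLeft (μ := fun _ : ι => ν) e.symm
  convert h using 2
  ext ω b
  simp [MeasurableEquiv.piCongrLeft, Equiv.piCongrLeft_apply]

theorem measure_eval_eq_mul_measure_update_preimage_le [DecidableEq ι]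
    [MeasurableSingletonClass α] {P : Measure (ι → α)}
    (hP : iIndepFun (fun b (ω : ι → α) => ω b) P) (b : ι) (v : α) {S : Set (ι → α)}
    (hS : MeasurableSet S) :
    P {ω | ω b = v} * P ((Function.update · b v) ⁻¹' S) ≤ P S := by
  set m : ι → MeasurableSpace (ι → α) := fun i => MeasurableSpace.comap (fun ω => ω i) inferInstance
  have hindep : Indep (⨆ i ∈ ({b} : Set ι), m i) (⨆ i ∈ ({b}ᶜ : Set ι), m i) P :=
    indep_iSup_of_disjoint (fun i => (measurable_pi_apply i).comap_le) hP disjoint_compl_right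
  have hupdate : Measurable[⨆ i ∈ ({b}ᶜ : Set ι), m i] fun ω : ι → α => Function.update ω b v := by
    refine @measurable_pi_lambda _ _ _ (_) _ _ fun i => ?_
    rcases eq_or_ne i b with rfl | hi
    · simp
    · simp only [Function.update_of_ne hi]
      exact (comap_measurable fun ω : ι → α => ω i).mono
        (le_iSup₂_of_le i (by simpa using hi) le_rfl) le_rfl
  have heval : MeasurableSet[⨆ i ∈ ({b} : Set ι), m i] {ω : ι → α | ω b = v} := by
    rw [iSup_singleton]
    exact ⟨{v}, measurableSet_singleton v, rfl⟩
  rw [← (Indep_iff _ _ P).1 hindep _ _ heval (hupdate hS)]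
  refine measure_mono ?_
  rintro ω ⟨rfl, hω⟩
  simpa using hω

theorem quasiMeasurePreserving_update [DecidableEq ι] [MeasurableSingletonClass α]
    {P : Measure (ι → α)}
    (hP : iIndepFun (fun b (ω : ι → α) => ω b) P) {b : ι} {v : α} (hv : P {ω | ω b = v} ≠ 0) :
    Measure.QuasiMeasurePreserving (Function.update · b v) P P := by
  have hmeas : Measurable fun ω : ι → α => Function.update ω b v :=
    measurable_update' |>.comp (measurable_id.prodMk measurable_const)
  refine ⟨hmeas, Measure.AbsolutelyContinuous.mk fun S hS h0 => ?_⟩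
  have h := measure_eval_eq_mul_measure_update_preimage_le hP b v hS
  rw [h0, nonpos_iff_eq_zero, mul_eq_zero] at h
  rw [Measure.map_apply hmeas hS]
  exact h.resolve_left hv

theorem measure_eq_zero_or_one_of_approx {Ω : Type*} [MeasurableSpace Ω] {P : Measure Ω}
    [IsProbabilityMeasure P] {B : Set Ω} (hB : MeasurableSet B)
    (h : ∀ ε > 0, ∃ (D : Set Ω) (φ : Ω → Ω), MeasurableSet D ∧ P.real (symmDiff B D) ≤ ε ∧
      MeasurePreserving φ P P ∧ φ ⁻¹' B = B ∧ P.real (D ∩ φ ⁻¹' D) = P.real D ^ 2) :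
    P B = 0 ∨ P B = 1 := by
  have hbound : ∀ ε > 0, |P.real B - P.real B ^ 2| ≤ 4 * ε := by
    intro ε hε
    obtain ⟨D, φ, hD, hBD, hφ, hφB, hsq⟩ := h ε hε
    have hφD : MeasurableSet (φ ⁻¹' D) := hφ.measurable hD
    have hcopy : P.real (symmDiff B (φ ⁻¹' D)) = P.real (symmDiff B D) := by
      rw [← hφ.measureReal_preimage (hB.symmDiff hD).nullMeasurableSet, Set.preimage_symmDiff, hφB]
    have hsub : symmDiff B (D ∩ φ ⁻¹' D) ⊆ symmDiff B D ∪ symmDiff B (φ ⁻¹' D) := by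
      intro ω
      simp only [Set.mem_symmDiff, Set.mem_inter_iff, Set.mem_union]
      tauto
    have hinter : P.real (symmDiff B (D ∩ φ ⁻¹' D)) ≤ 2 * ε :=
      (measureReal_mono hsub).trans ((measureReal_union_le _ _).trans (by linarith))
    have hclose := (abs_measureReal_sub_le_measureReal_symmDiff hB.nullMeasurableSet
      hD.nullMeasurableSet (μ := P)).trans hBD
    have hclose' := (abs_measureReal_sub_le_measureReal_symmDiff hB.nullMeasurableSet
      (hD.inter hφD).nullMeasurableSet (μ := P)).trans hinter
    rw [hsq] at hclose'
    rw [abs_le] at hclose hclose' ⊢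
    have hB0 : 0 ≤ P.real B := measureReal_nonneg
    have hB1 : P.real B ≤ 1 := measureReal_le_one
    have hD0 : 0 ≤ P.real D := measureReal_nonneg
    have hD1 : P.real D ≤ 1 := measureReal_le_one
    constructor <;> nlinarith
  have hzero : P.real B - P.real B ^ 2 = 0 := by
    refine abs_nonpos_iff.1 (le_of_forall_pos_le_add fun ε hε => ?_)
    linarith [hbound (ε / 4) (by positivity)]
  have hidem : P.real B = 0 ∨ P.real B = 1 := by
    rcases mul_eq_zero.1 (show P.real B * (1 - P.real B) = 0 by linarith) with h0 | h1
    · exact Or.inl h0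
    · exact Or.inr (by linarith)
  simpa [measureReal_def, ENNReal.toReal_eq_zero_iff, ENNReal.toReal_eq_one_iff] using hidem

theorem infinitePi_eq_zero_or_one_of_comp_equiv_preimage_eq [DecidableEq ι] (ν : Measure α)
    [IsProbabilityMeasure ν] {B : Set (ι → α)} (hB : MeasurableSet B)
    (hinv : ∀ F : Finset ι, ∃ e : ι ≃ ι, Disjoint F (F.image e) ∧
      (fun ω b => ω (e b)) ⁻¹' B = B) :
    Measure.infinitePi (fun _ : ι => ν) B = 0 ∨ Measure.infinitePi (fun _ : ι => ν) B = 1 := by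
  set P := Measure.infinitePi fun _ : ι => ν
  have hdense : P.MeasureDense (measurableCylinders fun _ : ι => α) :=
    Measure.MeasureDense.of_generateFrom_isSetAlgebra_finite P isSetAlgebra_measurableCylinders
      generateFrom_measurableCylinders.symm
  refine measure_eq_zero_or_one_of_approx hB fun ε hε => ?_
  obtain ⟨D, hD, hBD⟩ := hdense.approx B hB (measure_ne_top _ _) ε hε
  have hDm : MeasurableSet D := hdense.measurable D hD
  obtain ⟨F, S, hS, rfl⟩ := (mem_measurableCylinders _).1 hD
  obtain ⟨e, hdisj, hφB⟩ := hinv F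
  have hφ := measurePreserving_comp_equiv_infinitePi ν e
  refine ⟨_, _, hDm, ENNReal.toReal_le_of_le_ofReal hε.le hBD.le, hφ, hφB, ?_⟩
  have hindep := (iIndepFun_infinitePi (P := fun _ : ι => ν) (X := fun _ v => v)
    fun _ => measurable_id).indepFun_finset F (F.image e) hdisj fun b => measurable_pi_apply b
  let relabel : (F.image e → α) → F → α := fun a b => a ⟨e b, Finset.mem_image_of_mem e b.2⟩
  have hrelabel : Measurable relabel := by fun_prop
  have hprod := hindep.measure_inter_preimage_eq_mul S (relabel ⁻¹' S) hS (hrelabel hS)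
  change P (cylinder F S ∩ (fun ω b => ω (e b)) ⁻¹' cylinder F S) =
    P (cylinder F S) * P ((fun ω b => ω (e b)) ⁻¹' cylinder F S) at hprod
  rw [measureReal_def, hprod, hφ.measure_preimage hDm.nullMeasurableSet, ENNReal.toReal_mul, sq,
    measureReal_def]

end ProductMeasure

section StoppingSet

variable {ι α : Type*}

/-- A random finite set of coordinates discovered by exploration: configurations that agree on the
set found in one of them yield the same set. It is the spatial analogue of a stopping time. -/
def IsStoppingSet (T : (ι → α) → Finset ι) : Prop :=
  ∀ ω η, (∀ b ∈ T ω, η b = ω b) → T η = T ω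

variable [Fintype ι]

theorem sum_prod_ite_eq_one [DecidableEq ι] [Fintype α] [DecidableEq α] {R : Type*}
    [CommSemiring R] {w : α → R} (hw : ∑ v, w v = 1) (S : Finset ι) (a : ι → α) :
    ∑ η : ι → α, ∏ b, (if b ∈ S then if η b = a b then 1 else 0 else w (η b)) = 1 := by
  rw [← Fintype.prod_sum fun b v => if b ∈ S then if v = a b then 1 else 0 else w v]
  refine Finset.prod_eq_one fun b _ => ?_
  split_ifs <;> simp [hw]

theorem IsStoppingSet.sum_prod_ite_eq_one [DecidableEq ι] [Fintype α] {R : Type*} [CommSemiring R]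
    {T : (ι → α) → Finset ι} (hT : IsStoppingSet T) {w w' : α → R} (hw : ∑ v, w v = 1)
    (hw' : ∑ v, w' v = 1) :
    ∑ ω : ι → α, ∏ b, (if b ∈ T ω then w' (ω b) else w (ω b)) = 1 := by
  classical
  -- Resampling a `w'`-configuration off `T` gives the law on the left, and `T` is unchanged by it.
  have hswap : ∀ ω η : ι → α,
      (∏ b, if b ∈ T ω then w' (ω b) else w (ω b)) *
          ∏ b, (if b ∈ T ω then if η b = ω b then 1 else 0 else w' (η b)) =
        (∏ b, w' (η b)) * ∏ b, (if b ∈ T η then if ω b = η b then 1 else 0 else w (ω b)) := by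
    intro ω η
    rw [← Finset.prod_mul_distrib, ← Finset.prod_mul_distrib]
    by_cases hagree : ∀ b ∈ T ω, η b = ω b
    · refine Finset.prod_congr rfl fun b _ => ?_
      rw [hT ω η hagree]
      by_cases hb : b ∈ T ω
      · simp [hb, hagree b hb]
      · simp [hb, mul_comm]
    · have hagree' : ¬∀ b ∈ T η, ω b = η b := fun h =>
        hagree fun b hb => (h b (hT η ω h ▸ hb)).symm
      push Not at hagree hagree'
      obtain ⟨b, hb, hne⟩ := hagree
      obtain ⟨c, hc, hne'⟩ := hagree'
      rw [Finset.prod_eq_zero (Finset.mem_univ b) (by simp [hb, hne]),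
        Finset.prod_eq_zero (Finset.mem_univ c) (by simp [hc, hne'])]
  calc ∑ ω : ι → α, ∏ b, (if b ∈ T ω then w' (ω b) else w (ω b))
      = ∑ ω : ι → α, ∑ η : ι → α, (∏ b, if b ∈ T ω then w' (ω b) else w (ω b)) *
          ∏ b, (if b ∈ T ω then if η b = ω b then 1 else 0 else w' (η b)) :=
        Finset.sum_congr rfl fun ω _ => by
          rw [← Finset.mul_sum, BondPercolation.sum_prod_ite_eq_one hw', mul_one]
    _ = ∑ η : ι → α, ∏ b, w' (η b) := by
        rw [Finset.sum_comm]
        refine Finset.sum_congr rfl fun η _ => ?_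
        simp only [hswap]
        rw [← Finset.mul_sum, BondPercolation.sum_prod_ite_eq_one hw, mul_one]
    _ = 1 := by rw [← Fintype.prod_sum fun _ : ι => w', hw', Finset.prod_const_one]

theorem IsStoppingSet.integral_prod_eq_one [Finite α] [MeasurableSpace α]
    [MeasurableSingletonClass α] {ν : Measure α} [IsProbabilityMeasure ν]
    {T : (ι → α) → Finset ι} (hT : IsStoppingSet T) {g : α → ℝ} (hg : ∫ v, g v ∂ν = 1) :
    ∫ ω, ∏ b ∈ T ω, g (ω b) ∂Measure.pi (fun _ : ι => ν) = 1 := by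
  classical
  have := Fintype.ofFinite α
  have hν : ∑ v, ν.real {v} = 1 := by simp [sum_measureReal_singleton]
  have hνg : ∑ v, ν.real {v} * g v = 1 := by simpa [integral_fintype] using hg
  rw [integral_fintype .of_finite, ← hT.sum_prod_ite_eq_one hν hνg]
  refine Finset.sum_congr rfl fun ω _ => ?_
  rw [measureReal_def, Measure.pi_singleton, ENNReal.toReal_prod, smul_eq_mul,
    ← Finset.univ_inter (T ω), ← Finset.prod_ite_mem, ← Finset.prod_mul_distrib]
  refine Finset.prod_congr rfl fun b _ => ?_
  rw [Finset.univ_inter]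
  split_ifs <;> simp [measureReal_def]

end StoppingSet

theorem exp_sub_two_mul_sq_le_one_add {x : ℝ} (hx : |x| ≤ 1 / 2) :
    Real.exp (x - 2 * x ^ 2) ≤ 1 + x := by
  obtain ⟨hneg, hpos⟩ := abs_le.1 hx
  have hpos' : 0 < 1 - (x - 2 * x ^ 2) := by nlinarith [sq_nonneg x]
  calc Real.exp (x - 2 * x ^ 2) ≤ (1 - (x - 2 * x ^ 2))⁻¹ := by
        rw [le_inv_comm₀ (Real.exp_pos _) hpos', ← Real.exp_neg]
        linarith [Real.add_one_le_exp (-(x - 2 * x ^ 2))]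
    _ ≤ 1 + x := by
        rw [inv_le_iff_one_le_mul₀ hpos']
        nlinarith [mul_nonneg (sq_nonneg x) (by linarith : 0 ≤ 1 + 2 * x)]

theorem sum_le_two_mul_sum_sq_add_prod_one_add {ι : Type*} (S : Finset ι) {x : ι → ℝ}
    (hx : ∀ b ∈ S, |x b| ≤ 1 / 2) :
    ∑ b ∈ S, x b ≤ 2 * ∑ b ∈ S, x b ^ 2 + ∏ b ∈ S, (1 + x b) := by
  have hprod : Real.exp (∑ b ∈ S, (x b - 2 * x b ^ 2)) ≤ ∏ b ∈ S, (1 + x b) := by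
    rw [Real.exp_sum]
    exact Finset.prod_le_prod (fun _ _ => (Real.exp_pos _).le) fun b hb =>
      exp_sub_two_mul_sq_le_one_add (hx b hb)
  have hexp := Real.add_one_le_exp (∑ b ∈ S, (x b - 2 * x b ^ 2))
  rw [Finset.sum_sub_distrib, ← Finset.mul_sum] at hprod hexp
  linarith

section OpenGraph

variable {ι X : Type*} {s t : ι → X} {ω η : ι → Bool} {x y : X} {b : ι}

/-- The random graph of a bond configuration `ω`: bond `b` has endpoints `s b` and `t b`, and is
present when `ω b` is `true`. -/
def openGraph (s t : ι → X) (ω : ι → Bool) : SimpleGraph X :=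
  SimpleGraph.fromRel fun x y => ∃ b, ω b = true ∧ s b = x ∧ t b = y

/-- The cluster of `x` in the configuration `ω`: the vertices joined to `x` by open paths. -/
def cluster (s t : ι → X) (ω : ι → Bool) (x : X) : Set X :=
  {y | (openGraph s t ω).Reachable x y}

theorem mem_cluster_self : x ∈ cluster s t ω x := SimpleGraph.Reachable.rfl

theorem cluster_eq_iff : cluster s t ω x = cluster s t ω y ↔ y ∈ cluster s t ω x := by
  refine ⟨fun h => h ▸ mem_cluster_self, fun h => Set.ext fun z => ⟨h.symm.trans, h.trans⟩⟩

theorem reachable_of_open (hb : ω b = true) : (openGraph s t ω).Reachable (s b) (t b) := by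
  by_cases h : s b = t b
  · rw [h]
  · exact ((SimpleGraph.fromRel_adj ..).2 ⟨h, Or.inl ⟨b, hb, rfl, rfl⟩⟩).reachable

theorem openGraph_mono (h : ∀ b, ω b = true → η b = true) : openGraph s t ω ≤ openGraph s t η := by
  intro x y hxy
  obtain ⟨hne, hor⟩ := (SimpleGraph.fromRel_adj ..).1 hxy
  exact (SimpleGraph.fromRel_adj ..).2 ⟨hne, hor.imp (fun ⟨b, hb, hxy⟩ => ⟨b, h b hb, hxy⟩)
    fun ⟨b, hb, hyx⟩ => ⟨b, h b hb, hyx⟩⟩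

theorem cluster_subset_of_forall_open {A : Set X} (hx : x ∈ A)
    (hA : ∀ b, ω b = true → (s b ∈ A ↔ t b ∈ A)) : cluster s t ω x ⊆ A := by
  rintro y ⟨p⟩
  induction p with
  | nil => exact hx
  | cons hadj _ ih =>
    refine ih ?_
    rcases ((SimpleGraph.fromRel_adj ..).1 hadj).2 with ⟨b, hb, rfl, rfl⟩ | ⟨b, hb, rfl, rfl⟩
    exacts [(hA b hb).1 hx, (hA b hb).2 hx]

theorem open_mem_cluster_iff (hb : ω b = true) :
    s b ∈ cluster s t ω x ↔ t b ∈ cluster s t ω x :=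
  ⟨fun h => h.trans (reachable_of_open hb), fun h => h.trans (reachable_of_open hb).symm⟩

theorem cluster_eq_of_agree
    (h : ∀ b, s b ∈ cluster s t ω x ∨ t b ∈ cluster s t ω x → η b = ω b) :
    cluster s t η x = cluster s t ω x := by
  have hsub : cluster s t η x ⊆ cluster s t ω x :=
    cluster_subset_of_forall_open mem_cluster_self fun b hb =>
      ⟨fun hs => (open_mem_cluster_iff (h b (.inl hs) ▸ hb)).1 hs,
        fun ht => (open_mem_cluster_iff (h b (.inr ht) ▸ hb)).2 ht⟩
  exact hsub.antisymm <| cluster_subset_of_forall_open mem_cluster_self fun b hb =>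
    ⟨fun hs => (open_mem_cluster_iff ((h b (.inl (hsub hs))).trans hb)).1 hs,
      fun ht => (open_mem_cluster_iff ((h b (.inr (hsub ht))).trans hb)).2 ht⟩

theorem cluster_update_subset [DecidableEq ι] :
    cluster s t (Function.update ω b true) x ⊆
      cluster s t ω x ∪ (cluster s t ω (s b) ∪ cluster s t ω (t b)) := by
  refine cluster_subset_of_forall_open (.inl mem_cluster_self) fun c hc => ?_
  rcases eq_or_ne c b with rfl | hcb
  · exact iff_of_true (.inr (.inl mem_cluster_self)) (.inr (.inr mem_cluster_self))
  · rw [Function.update_of_ne hcb] at hc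
    exact or_congr (open_mem_cluster_iff hc)
      (or_congr (open_mem_cluster_iff hc) (open_mem_cluster_iff hc))

theorem mem_cluster_iff_exists_finset :
    y ∈ cluster s t ω x ↔ ∃ F : Finset ι, (∀ b ∈ F, ω b = true) ∧
      y ∈ cluster s t (fun b => open Classical in decide (b ∈ F)) x := by
  classical
  refine ⟨fun hy => ?_, fun ⟨F, hF, hy⟩ => hy.mono (openGraph_mono fun b hb => ?_)⟩
  · refine cluster_subset_of_forall_open (A := {y | ∃ F : Finset ι, (∀ b ∈ F, ω b = true) ∧
      y ∈ cluster s t (fun b => decide (b ∈ F)) x}) ⟨∅, by simp, mem_cluster_self⟩ ?_ hy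
    intro b hb
    have hstep : ∀ y z, (∀ F : Finset ι, b ∈ F → z ∈ cluster s t (fun b => decide (b ∈ F)) y) →
        (∃ F : Finset ι, (∀ c ∈ F, ω c = true) ∧ y ∈ cluster s t (fun b => decide (b ∈ F)) x) →
        ∃ F : Finset ι, (∀ c ∈ F, ω c = true) ∧ z ∈ cluster s t (fun b => decide (b ∈ F)) x := by
      rintro y z hyz ⟨F, hF, hy⟩
      refine ⟨insert b F, by simpa [hb] using hF, ?_⟩
      refine (hy.mono (openGraph_mono fun c hc => ?_)).trans (hyz _ (Finset.mem_insert_self b F))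
      simp_all
    exact ⟨hstep _ _ fun F hF => reachable_of_open (by simpa using hF),
      hstep _ _ fun F hF => (reachable_of_open (by simpa using hF)).symm⟩
  · exact hF b (by simpa using hb)

theorem measurableSet_mem_cluster [Countable ι] (s t : ι → X) (x y : X) :
    MeasurableSet {ω : ι → Bool | y ∈ cluster s t ω x} := by
  classical
  have hunion : {ω : ι → Bool | y ∈ cluster s t ω x} =
      ⋃ F ∈ {F : Finset ι | y ∈ cluster s t (fun b => decide (b ∈ F)) x},
        ⋂ b ∈ F, (fun ω => ω b) ⁻¹' {true} := by
    ext ω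
    rw [Set.mem_ofPred_eq, mem_cluster_iff_exists_finset]
    simp [and_comm]
  rw [hunion]
  exact .biUnion (Set.to_countable _) fun F _ => F.measurableSet_biInter fun b _ =>
    measurable_pi_apply b (measurableSet_singleton true)

theorem measurableSet_infinite_cluster [Countable ι] [Countable X] (s t : ι → X) (x : X) :
    MeasurableSet {ω : ι → Bool | (cluster s t ω x).Infinite} :=
  (measurable_set_iff.2 fun y => measurableSet_setOfPred.1 (measurableSet_mem_cluster s t x y))
    MeasurableSet.setOfPred_infinite

end OpenGraph

theorem sum_ite_eq_or_eq {γ R : Type*} [DecidableEq γ] [AddCommMonoid R] (K : Finset γ) (u v : γ)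
    (r : R) : ∑ C ∈ K, (if C = u ∨ C = v then r else 0) =
      (if u ∈ K ∨ v ∈ K then r else 0) + if u ∈ K ∧ v ∈ K ∧ u ≠ v then r else 0 := by
  rcases eq_or_ne u v with rfl | huv
  · simp
  · have hsplit : ∀ C, (if C = u ∨ C = v then r else 0) =
        (if C = u then r else 0) + if C = v then r else 0 := by
      intro C
      by_cases hu : C = u
      · simp [hu, huv]
      · simp [hu]
    simp only [hsplit, Finset.sum_add_distrib, Finset.sum_ite_eq']
    by_cases hu : u ∈ K <;> by_cases hv : v ∈ K <;> simp [hu, hv, huv]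

section Bridges

variable {ι X : Type*} {s t : ι → X} {ω : ι → Bool} {b : ι} {B : Finset X}

/-- The centred indicator `(1 - ω b) - (1 - p)` that a bond of density `p` is closed. -/
def centredClosed (p : ℝ) (v : Bool) : ℝ := p - if v then 1 else 0

theorem abs_centredClosed_le {p : ℝ} (h0 : 0 ≤ p) (h1 : p ≤ 1) (v : Bool) :
    |centredClosed p v| ≤ 1 := by
  rw [abs_le]
  cases v <;> constructor <;> simp only [centredClosed, Bool.false_eq_true, if_true, if_false] <;>
    linarith

theorem integral_one_add_mul_centredClosed (ν : Measure Bool) [IsProbabilityMeasure ν] (δ : ℝ) :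
    ∫ v, (1 + δ * centredClosed (ν.real {true}) v) ∂ν = 1 := by
  have hν : ν.real {true} + ν.real {false} = 1 := by
    rw [← Fintype.sum_bool fun v => ν.real {v}, sum_measureReal_singleton, Finset.coe_univ,
      probReal_univ]
  rw [integral_fintype .of_finite, Fintype.sum_bool]
  simp only [centredClosed, smul_eq_mul, Bool.false_eq_true, if_true, if_false]
  linear_combination (1 + δ * ν.real {true}) * hν

/-- The likelihood ratio that tilts the density of the bonds in `T` from `p` to
`p - δ * p * (1 - p)`. -/
def tilt (δ p : ℝ) (T : Finset ι) (ω : ι → Bool) : ℝ := ∏ b ∈ T, (1 + δ * centredClosed p (ω b))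

theorem tilt_nonneg {p δ : ℝ} (h0 : 0 ≤ p) (h1 : p ≤ 1) (hδ : |δ| ≤ 1) (T : Finset ι)
    (ω : ι → Bool) : 0 ≤ tilt δ p T ω :=
  Finset.prod_nonneg fun b _ => by
    have h : |δ * centredClosed p (ω b)| ≤ 1 := by
      rw [abs_mul]
      exact mul_le_one₀ hδ (abs_nonneg _) (abs_centredClosed_le h0 h1 _)
    linarith [(abs_le.1 h).1]

theorem mul_sum_centredClosed_le {p δ : ℝ} (h0 : 0 ≤ p) (h1 : p ≤ 1) (hδ : |δ| ≤ 1 / 2)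
    (T : Finset ι) (ω : ι → Bool) :
    δ * ∑ b ∈ T, centredClosed p (ω b) ≤ 2 * δ ^ 2 * #T + tilt δ p T ω := by
  have habs : ∀ b, |δ * centredClosed p (ω b)| ≤ |δ| := fun b => by
    rw [abs_mul]
    exact mul_le_of_le_one_right (abs_nonneg δ) (abs_centredClosed_le h0 h1 _)
  have hsq : ∑ b ∈ T, (δ * centredClosed p (ω b)) ^ 2 ≤ #T * δ ^ 2 := by
    rw [← nsmul_eq_mul]
    exact Finset.sum_le_card_nsmul _ _ _ fun b _ => sq_le_sq.2 (habs b)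
  have hsum := sum_le_two_mul_sum_sq_add_prod_one_add T (x := fun b => δ * centredClosed p (ω b))
    fun b _ => (habs b).trans hδ
  rw [← Finset.mul_sum] at hsum
  unfold tilt
  linarith

/-- The bond `b` joins two distinct clusters, both of which meet `B`. -/
def IsBridge (s t : ι → X) (B : Set X) (ω : ι → Bool) (b : ι) : Prop :=
  cluster s t ω (s b) ∈ cluster s t ω '' B ∧ cluster s t ω (t b) ∈ cluster s t ω '' B ∧
    cluster s t ω (s b) ≠ cluster s t ω (t b)

theorem IsBridge.eq_false (h : IsBridge s t B ω b) : ω b = false := by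
  by_contra hb
  exact h.2.2 (cluster_eq_iff.2 (reachable_of_open (by simpa using hb)))

variable [Fintype ι]

open Classical in
/-- The bonds with an endpoint in `A`. For a cluster, these are the bonds whose state has to be
inspected in order to discover it. -/
def touchingBonds (s t : ι → X) (A : Set X) : Finset ι := {b | s b ∈ A ∨ t b ∈ A}

theorem isStoppingSet_touchingBonds_clusters (s t : ι → X) (A : Set X) :
    IsStoppingSet fun ω => touchingBonds s t (⋃ x ∈ A, cluster s t ω x) := by
  intro ω η h
  have heq : ∀ x ∈ A, cluster s t η x = cluster s t ω x := fun x hx =>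
    cluster_eq_of_agree fun b hb => h b <| by
      simp only [touchingBonds, Finset.mem_filter_univ, Set.mem_iUnion₂]
      exact hb.imp (fun hs => ⟨x, hx, hs⟩) fun ht => ⟨x, hx, ht⟩
  simp only [Set.iUnion₂_congr heq]

open Classical in
theorem sum_clusters_sum_touchingBonds {R : Type*} [AddCommMonoid R] (f : ι → R) :
    ∑ C ∈ B.image (cluster s t ω), ∑ b ∈ touchingBonds s t C, f b =
      ∑ b ∈ touchingBonds s t (⋃ x ∈ B, cluster s t ω x), f b +
        ∑ b with IsBridge s t B ω b, f b := by
  simp only [touchingBonds, Finset.sum_filter]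
  rw [Finset.sum_comm, ← Finset.sum_add_distrib]
  refine Finset.sum_congr rfl fun b _ => ?_
  calc ∑ C ∈ B.image (cluster s t ω), (if s b ∈ C ∨ t b ∈ C then f b else 0)
      = ∑ C ∈ B.image (cluster s t ω),
          if C = cluster s t ω (s b) ∨ C = cluster s t ω (t b) then f b else 0 := by
        refine Finset.sum_congr rfl fun C hC => ?_
        obtain ⟨x, -, rfl⟩ := Finset.mem_image.1 hC
        simp only [cluster_eq_iff]
    _ = _ := by
        rw [sum_ite_eq_or_eq]
        simp only [IsBridge, Set.mem_iUnion, exists_prop, ← cluster_eq_iff, Finset.mem_image,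
          Set.mem_image, Finset.mem_coe, ← exists_or, ← and_or_left]

open Classical in
theorem sum_card_touchingBonds_clusters_le (s t : ι → X) (B : Finset X) (ω : ι → Bool) :
    ∑ C ∈ B.image (cluster s t ω), #(touchingBonds s t C) ≤ 2 * Fintype.card ι := by
  simp only [Finset.card_eq_sum_ones]
  rw [sum_clusters_sum_touchingBonds, two_mul, ← Finset.card_eq_sum_ones, ← Finset.card_eq_sum_ones]
  exact add_le_add (Finset.card_le_univ _) (Finset.card_le_univ _)

open Classical in
theorem mul_card_isBridge_le {p ε : ℝ} (h0 : 0 ≤ p) (h1 : p ≤ 1) (hε0 : 0 ≤ ε) (hε : ε ≤ 1 / 2)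
    (s t : ι → X) (B : Finset X) (ω : ι → Bool) :
    ε * p * #{b | IsBridge s t B ω b} ≤ 6 * ε ^ 2 * Fintype.card ι +
      ∑ x ∈ B, tilt ε p (touchingBonds s t (cluster s t ω x)) ω +
      tilt (-ε) p (touchingBonds s t (⋃ x ∈ B, cluster s t ω x)) ω := by
  set 𝒞 := B.image (cluster s t ω)
  set T := touchingBonds s t (⋃ x ∈ B, cluster s t ω x)
  have hεabs : |ε| ≤ 1 / 2 := by rwa [abs_of_nonneg hε0]
  have hbridge : ∑ b with IsBridge s t B ω b, centredClosed p (ω b) =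
      p * #{b | IsBridge s t B ω b} := by
    rw [mul_comm, ← nsmul_eq_mul]
    refine Finset.sum_eq_card_nsmul fun b hb => ?_
    simp [centredClosed, (Finset.mem_filter.1 hb).2.eq_false]
  have hclusters : ε * ∑ C ∈ 𝒞, ∑ b ∈ touchingBonds s t C, centredClosed p (ω b) ≤
      2 * ε ^ 2 * (2 * Fintype.card ι) + ∑ C ∈ 𝒞, tilt ε p (touchingBonds s t C) ω := by
    have hcard : ∑ C ∈ 𝒞, (#(touchingBonds s t C) : ℝ) ≤ 2 * Fintype.card ι := by
      exact_mod_cast sum_card_touchingBonds_clusters_le s t B ω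
    have hsum := Finset.sum_le_sum fun C (_ : C ∈ 𝒞) =>
      mul_sum_centredClosed_le h0 h1 hεabs (touchingBonds s t C) ω
    rw [← Finset.mul_sum, Finset.sum_add_distrib, ← Finset.mul_sum] at hsum
    exact hsum.trans (by gcongr)
  have hunion : -ε * ∑ b ∈ T, centredClosed p (ω b) ≤
      2 * ε ^ 2 * Fintype.card ι + tilt (-ε) p T ω := by
    refine (mul_sum_centredClosed_le h0 h1 (by rwa [abs_neg]) T ω).trans ?_
    rw [neg_sq]
    gcongr
    exact Finset.card_le_univ T
  have hvertices : ∑ C ∈ 𝒞, tilt ε p (touchingBonds s t C) ω ≤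
      ∑ x ∈ B, tilt ε p (touchingBonds s t (cluster s t ω x)) ω :=
    Finset.sum_image_le_of_nonneg fun x _ => tilt_nonneg h0 h1 (by linarith) _ ω
  rw [sum_clusters_sum_touchingBonds, hbridge] at hclusters
  linarith

open Classical in
theorem mul_sum_measureReal_isBridge_le {ε : ℝ} (hε0 : 0 ≤ ε) (hε : ε ≤ 1 / 2)
    (ν : Measure Bool) [IsProbabilityMeasure ν] (s t : ι → X) (B : Finset X) :
    ε * ν.real {true} * ∑ b, (Measure.pi fun _ : ι => ν).real {ω | IsBridge s t B ω b} ≤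
      6 * ε ^ 2 * Fintype.card ι + #B + 1 := by
  set μ := Measure.pi fun _ : ι => ν
  have hint : ∀ f : (ι → Bool) → ℝ, Integrable f μ := fun f => .of_finite
  have htilt : ∀ (δ : ℝ) (A : Set X),
      ∫ ω, tilt δ (ν.real {true}) (touchingBonds s t (⋃ x ∈ A, cluster s t ω x)) ω ∂μ = 1 :=
    fun δ A => (isStoppingSet_touchingBonds_clusters s t A).integral_prod_eq_one
      (integral_one_add_mul_centredClosed ν δ)
  have hcount : ∫ ω, (#{b | IsBridge s t B ω b} : ℝ) ∂μ =
      ∑ b, μ.real {ω | IsBridge s t B ω b} := by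
    simp only [Finset.card_filter, Nat.cast_sum, Nat.cast_ite, Nat.cast_one, Nat.cast_zero]
    rw [integral_finsetSum _ fun b _ => hint _]
    refine Finset.sum_congr rfl fun b _ => ?_
    rw [← integral_indicator_one (Set.toFinite _).measurableSet]
    rfl
  rw [← hcount, ← integral_const_mul]
  refine (integral_mono (hint _) (hint _) fun ω =>
    mul_card_isBridge_le measureReal_nonneg measureReal_le_one hε0 hε s t B ω).trans_eq ?_
  rw [integral_add (hint _) (hint _), integral_add (hint _) (hint _),
    integral_finsetSum _ fun x _ => hint _]
  have hvertex := fun x => htilt ε {x}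
  have hunion := htilt (-ε) B
  simp only [Set.biUnion_singleton, Finset.mem_coe] at hvertex hunion
  simp [hvertex, hunion]

end Bridges

section Uniqueness

variable {ι X : Type*} {s t : ι → X} {P : Measure (ι → Bool)}

theorem ae_cluster_eq_of_walk [DecidableEq ι]
    (hupdate : ∀ b, Measure.QuasiMeasurePreserving (fun ω => Function.update ω b true) P P)
    (hbond : ∀ b, ∀ᵐ ω ∂P, (cluster s t ω (s b)).Infinite → (cluster s t ω (t b)).Infinite →
      cluster s t ω (s b) = cluster s t ω (t b))
    {x y : X} (p : (openGraph s t fun _ => true).Walk x y) :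
    ∀ᵐ ω ∂P, (cluster s t ω x).Infinite → (cluster s t ω y).Infinite →
      cluster s t ω x = cluster s t ω y := by
  induction p with
  | nil => exact .of_forall fun ω _ _ => rfl
  | @cons x x' y hadj _ ih =>
    obtain ⟨b, hb⟩ : ∃ b, (s b = x ∧ t b = x') ∨ (s b = x' ∧ t b = x) := by
      rcases ((SimpleGraph.fromRel_adj ..).1 hadj).2 with ⟨b, -, h⟩ | ⟨b, -, h⟩
      exacts [⟨b, .inl h⟩, ⟨b, .inr h⟩]
    filter_upwards [hbond b, ih, (hupdate b).ae ih] with ω hends hω hinsert hx hy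
    by_cases hx' : (cluster s t ω x').Infinite
    · refine .trans ?_ (hω hx' hy)
      rcases hb with ⟨rfl, rfl⟩ | ⟨rfl, rfl⟩
      exacts [hends hx hx', (hends hx' hx).symm]
    -- If `x'` lies in a finite cluster, opening `b` attaches that cluster to the one of `x`.
    set η := Function.update ω b true
    have hmono : ∀ z, cluster s t ω z ⊆ cluster s t η z := fun z w hw =>
      hw.mono (openGraph_mono fun c hc => by by_cases h : c = b <;> simp [η, h, hc])
    have hjoin : cluster s t η x = cluster s t η x' := by
      have hopen : cluster s t η (s b) = cluster s t η (t b) :=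
        cluster_eq_iff.2 (reachable_of_open (by simp [η]))
      rcases hb with ⟨rfl, rfl⟩ | ⟨rfl, rfl⟩
      exacts [hopen, hopen.symm]
    have hyx : y ∈ cluster s t η x := by
      rw [← cluster_eq_iff, hjoin]
      exact hinsert (hjoin ▸ hx.mono (hmono x)) (hy.mono (hmono y))
    have hyω : y ∈ cluster s t ω x ∪ cluster s t ω x' := by
      rcases hb with ⟨rfl, rfl⟩ | ⟨rfl, rfl⟩ <;>
        simpa [or_comm, or_left_comm] using cluster_update_subset hyx
    rcases hyω with h | h
    · exact cluster_eq_iff.2 h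
    · exact absurd (cluster_eq_iff.2 h ▸ hy) hx'

theorem ae_cluster_eq_of_infinite [Countable X] [DecidableEq ι]
    (hconn : (openGraph s t fun _ => true).Preconnected)
    (hupdate : ∀ b, Measure.QuasiMeasurePreserving (fun ω => Function.update ω b true) P P)
    (hbond : ∀ b, ∀ᵐ ω ∂P, (cluster s t ω (s b)).Infinite → (cluster s t ω (t b)).Infinite →
      cluster s t ω (s b) = cluster s t ω (t b)) :
    ∀ᵐ ω ∂P, ∀ x y, (cluster s t ω x).Infinite → (cluster s t ω y).Infinite →
      cluster s t ω x = cluster s t ω y :=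
  ae_all_iff.2 fun x => ae_all_iff.2 fun y =>
    (hconn x y).elim fun p => ae_cluster_eq_of_walk hupdate hbond p

end Uniqueness

section FiniteVolume

variable {ι X : Type*} {s t : ι → X} {ω : ι → Bool} {x y : X}

theorem cluster_comp_equiv (e : ι ≃ ι) (f : X ≃ X) (hs : ∀ b, s (e b) = f (s b))
    (ht : ∀ b, t (e b) = f (t b)) (ω : ι → Bool) (x : X) :
    cluster s t (fun b => ω (e b)) x = f ⁻¹' cluster s t ω (f x) := by
  refine Set.Subset.antisymm ?_ ?_
  · refine cluster_subset_of_forall_open mem_cluster_self fun b hb => ?_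
    simp only [Set.mem_preimage, ← hs, ← ht]
    exact open_mem_cluster_iff hb
  · suffices h : cluster s t ω (f x) ⊆ f.symm ⁻¹' cluster s t (fun b => ω (e b)) x from
      fun y hy => by simpa using h hy
    refine cluster_subset_of_forall_open (by simpa using mem_cluster_self) fun c hc => ?_
    obtain ⟨b, rfl⟩ := e.surjective c
    simpa [hs, ht] using open_mem_cluster_iff (ω := fun b => ω (e b)) hc

theorem infinite_cluster_comp_equiv_iff {e : ι ≃ ι} {f : X ≃ X} (hs : ∀ b, s (e b) = f (s b))
    (ht : ∀ b, t (e b) = f (t b)) :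
    (cluster s t (fun b => ω (e b)) x).Infinite ↔ (cluster s t ω (f x)).Infinite := by
  rw [cluster_comp_equiv e f hs ht, ← f.image_symm_eq_preimage,
    Set.infinite_image_iff f.symm.injective.injOn]

/-- The vertices `x` and `y` lie in two distinct infinite clusters. -/
def InDistinctInfiniteClusters (s t : ι → X) (ω : ι → Bool) (x y : X) : Prop :=
  (cluster s t ω x).Infinite ∧ (cluster s t ω y).Infinite ∧ cluster s t ω x ≠ cluster s t ω y

theorem measurableSet_inDistinctInfiniteClusters [Countable ι] [Countable X] (s t : ι → X)
    (x y : X) : MeasurableSet {ω | InDistinctInfiniteClusters s t ω x y} := by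
  simp only [InDistinctInfiniteClusters, Ne, cluster_eq_iff]
  exact (measurableSet_infinite_cluster s t x).inter <|
    (measurableSet_infinite_cluster s t y).inter (measurableSet_mem_cluster s t x y).compl

theorem inDistinctInfiniteClusters_comp_equiv_iff {e : ι ≃ ι} {f : X ≃ X}
    (hs : ∀ b, s (e b) = f (s b)) (ht : ∀ b, t (e b) = f (t b)) :
    InDistinctInfiniteClusters s t (fun b => ω (e b)) x y ↔
      InDistinctInfiniteClusters s t ω (f x) (f y) := by
  unfold InDistinctInfiniteClusters
  rw [infinite_cluster_comp_equiv_iff hs ht, infinite_cluster_comp_equiv_iff hs ht,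
    cluster_comp_equiv e f hs ht, cluster_comp_equiv e f hs ht,
    f.surjective.preimage_injective.ne_iff]

variable {E : Finset ι} {Λ B : Finset X}

theorem cluster_restrict_subset :
    cluster (fun b : E => s b) (fun b : E => t b) (E.restrict ω) x ⊆ cluster s t ω x :=
  cluster_subset_of_forall_open mem_cluster_self fun _ hb => open_mem_cluster_iff hb

theorem exists_mem_cluster_restrict_of_infinite
    (hE : ∀ b, s b ∈ Λ ∨ t b ∈ Λ → b ∈ E)
    (hΛ : ∀ b ∈ E, (s b ∈ Λ ∨ s b ∈ B) ∧ (t b ∈ Λ ∨ t b ∈ B)) (hx : x ∈ Λ ∨ x ∈ B)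
    (hinf : (cluster s t ω x).Infinite) :
    ∃ y ∈ B, y ∈ cluster (fun b : E => s b) (fun b : E => t b) (E.restrict ω) x := by
  -- A restricted cluster avoiding `B` stays in `Λ`, where it sees every open bond: it would be the
  -- whole cluster, contained in the finite set `Λ`.
  by_contra! hB
  set C := cluster (fun b : E => s b) (fun b : E => t b) (E.restrict ω) x
  have hCΛ : C ⊆ Λ := fun y hy => by
    have hΛB : C ⊆ {y | y ∈ Λ ∨ y ∈ B} := cluster_subset_of_forall_open hx fun b _ =>
      iff_of_true (hΛ b b.2).1 (hΛ b b.2).2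
    exact (hΛB hy).resolve_right fun h => hB y h hy
  refine hinf (Λ.finite_toSet.subset (.trans ?_ hCΛ))
  refine cluster_subset_of_forall_open mem_cluster_self fun b hb => ?_
  exact ⟨fun h => (open_mem_cluster_iff (b := (⟨b, hE b (.inl (hCΛ h))⟩ : E)) hb).1 h,
    fun h => (open_mem_cluster_iff (b := (⟨b, hE b (.inr (hCΛ h))⟩ : E)) hb).2 h⟩

theorem InDistinctInfiniteClusters.isBridge_restrict
    (hE : ∀ b, s b ∈ Λ ∨ t b ∈ Λ → b ∈ E)
    (hΛ : ∀ b ∈ E, (s b ∈ Λ ∨ s b ∈ B) ∧ (t b ∈ Λ ∨ t b ∈ B)) {b : E}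
    (h : InDistinctInfiniteClusters s t ω (s b) (t b)) :
    IsBridge (fun b : E => s b) (fun b : E => t b) B (E.restrict ω) b := by
  obtain ⟨hs, ht, hne⟩ := h
  obtain ⟨y, hyB, hy⟩ := exists_mem_cluster_restrict_of_infinite hE hΛ (hΛ b b.2).1 hs
  obtain ⟨z, hzB, hz⟩ := exists_mem_cluster_restrict_of_infinite hE hΛ (hΛ b b.2).2 ht
  exact ⟨⟨y, hyB, (cluster_eq_iff.2 hy).symm⟩, ⟨z, hzB, (cluster_eq_iff.2 hz).symm⟩,
    fun heq => hne (cluster_eq_iff.2 (cluster_restrict_subset (cluster_eq_iff.1 heq)))⟩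

theorem mul_sum_measureReal_inDistinctInfiniteClusters_le
    (hE : ∀ b, s b ∈ Λ ∨ t b ∈ Λ → b ∈ E)
    (hΛ : ∀ b ∈ E, (s b ∈ Λ ∨ s b ∈ B) ∧ (t b ∈ Λ ∨ t b ∈ B))
    (ν : Measure Bool) [IsProbabilityMeasure ν] {ε : ℝ} (hε0 : 0 ≤ ε) (hε : ε ≤ 1 / 2) :
    ε * ν.real {true} * ∑ b ∈ E, (Measure.infinitePi fun _ : ι => ν).real
        {ω | InDistinctInfiniteClusters s t ω (s b) (t b)} ≤ 6 * ε ^ 2 * #E + #B + 1 := by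
  rw [← Finset.sum_coe_sort E, ← Fintype.card_coe E]
  refine le_trans ?_ (mul_sum_measureReal_isBridge_le hε0 hε ν (fun b : E => s b)
    (fun b : E => t b) B)
  gcongr with b
  rw [← Measure.infinitePi_map_restrict (μ := fun _ : ι => ν),
    map_measureReal_apply (by fun_prop) (Set.toFinite _).measurableSet]
  exact measureReal_mono fun ω h => h.isBridge_restrict hE hΛ

end FiniteVolume

end BondPercolation

namespace SRWPC

open BondPercolation

variable {d : ℕ} {ω : Config d} {x y : V d}

section Lattice

/-- The first endpoint of a bond of `ℤ^d`. -/
def src (b : EdgeIx d) : V d := b.1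

/-- The second endpoint of a bond of `ℤ^d`. -/
def tgt (b : EdgeIx d) : V d := b.1 + unitVec d b.2

/-- The open cluster of `x` in the percolation configuration `ω` on `ℤ^d`. -/
abbrev openCluster (ω : Config d) (x : V d) : Set (V d) := cluster src tgt ω x

/-- The translation by `z` on the bonds of `ℤ^d`, so that `shift z ω = ω ∘ bondShift z`. -/
def bondShift (z : V d) : EdgeIx d ≃ EdgeIx d := (Equiv.addRight z).prodCongr (Equiv.refl _)

theorem src_bondShift (z : V d) (b : EdgeIx d) : src (bondShift z b) = Equiv.addRight z (src b) :=
  rfl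

theorem tgt_bondShift (z : V d) (b : EdgeIx d) : tgt (bondShift z b) = Equiv.addRight z (tgt b) :=
  add_right_comm _ _ _

theorem infinite_openCluster_shift_iff {z : V d} :
    (openCluster (shift z ω) x).Infinite ↔ (openCluster ω (x + z)).Infinite :=
  infinite_cluster_comp_equiv_iff (src_bondShift z) (tgt_bondShift z)

theorem shift_zero (ω : Config d) : shift 0 ω = ω := by
  funext b
  simp [shift]

theorem shift_shift (z w : V d) (ω : Config d) : shift z (shift w ω) = shift (z + w) ω := by
  funext b
  simp [shift, add_assoc]

theorem preconnected_openGraph_true :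
    (openGraph src tgt fun _ : EdgeIx d => true).Preconnected := by
  intro x y
  let S : AddSubgroup (V d) :=
    { carrier := {v | ∀ z, (openGraph src tgt fun _ => true).Reachable z (z + v)}
      zero_mem' := fun z => by simp
      add_mem' := fun {v w} hv hw z => (hv z).trans (by simpa [add_assoc] using hw (z + v))
      neg_mem' := fun {v} hv z => by simpa using (hv (z + -v)).symm }
  have hunit : ∀ i, unitVec d i ∈ S := fun i z => reachable_of_open (b := (z, i)) rfl
  have hsum : y - x = ∑ i, (y - x) i • unitVec d i := by
    funext j
    simp [Finset.sum_apply, unitVec]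
  have hmem : y - x ∈ S := hsum ▸ S.sum_mem fun i _ => S.zsmul_mem (hunit i) _
  simpa using hmem x

end Lattice

section Boxes

/-- The box `[-n,n]^d` of `ℤ^d`. -/
def box (d n : ℕ) : Finset (V d) := Finset.Icc (fun _ => -(n : ℤ)) fun _ => (n : ℤ)

theorem mem_box {n : ℕ} : x ∈ box d n ↔ ∀ i, -(n : ℤ) ≤ x i ∧ x i ≤ n := by
  simp only [box, Finset.mem_Icc, Pi.le_def, ← forall_and]

theorem box_subset_box {m n : ℕ} (h : m ≤ n) : box d m ⊆ box d n :=
  Finset.Icc_subset_Icc (fun _ => by simpa) fun _ => by simpa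

theorem card_box (d n : ℕ) : #(box d n) = (2 * n + 1) ^ d := by
  rw [box, Pi.card_Icc]
  simp only [Int.card_Icc, Finset.prod_const, Finset.card_univ, Fintype.card_fin]
  congr 1
  omega

theorem card_box_sdiff_box (d n : ℕ) :
    (#(box d (n + 2) \ box d n) : ℝ) = (2 * n + 5) ^ d - (2 * n + 1) ^ d := by
  have hsub : box d n ⊆ box d (n + 2) := box_subset_box (by omega)
  rw [Finset.cast_card_sdiff hsub, card_box, card_box]
  push_cast
  ring

theorem add_mem_box_of_abs_le {n : ℕ} {v : V d} (hx : x ∈ box d n) (hv : ∀ i, |v i| ≤ 1) :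
    x + v ∈ box d (n + 1) := by
  refine mem_box.2 fun i => ?_
  have hxi := mem_box.1 hx i
  have hvi := abs_le.1 (hv i)
  simp only [Pi.add_apply]
  omega

theorem abs_unitVec_le (i j : Fin d) : |unitVec d i j| ≤ 1 := by
  unfold unitVec
  split_ifs <;> simp

theorem tgt_mem_box {n : ℕ} {b : EdgeIx d} (h : src b ∈ box d n) : tgt b ∈ box d (n + 1) :=
  add_mem_box_of_abs_le h (abs_unitVec_le b.2)

theorem src_mem_box {n : ℕ} {b : EdgeIx d} (h : tgt b ∈ box d n) : src b ∈ box d (n + 1) := by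
  simpa [src, tgt] using add_mem_box_of_abs_le (v := -unitVec d b.2) h
    fun i => by simpa using abs_unitVec_le b.2 i

theorem inBox_natCast_iff {n : ℕ} : inBox x n ↔ x ∈ box d n := by
  simp only [inBox, mem_box, abs_le]
  norm_cast

theorem exists_subset_box {S : Set (V d)} (hS : S.Finite) : ∃ n, S ⊆ box d n := by
  obtain ⟨r, hr⟩ := (hS.image norm).bddAbove
  refine ⟨⌈r⌉₊, fun x hx => inBox_natCast_iff.1 fun i => ?_⟩
  rw [← Int.norm_eq_abs]
  exact (norm_le_pi_norm x i).trans ((hr (Set.mem_image_of_mem _ hx)).trans (Nat.le_ceil r))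

end Boxes

section OpenPaths

variable {e : V d}

theorem edgeOpen.mem_Ud (h : edgeOpen ω x e) : e ∈ Ud d := by
  obtain ⟨i, ⟨rfl, -⟩ | ⟨rfl, -⟩⟩ := h <;> simp [Ud]

theorem edgeOpen_unitVec {b : EdgeIx d} (hb : ω b = true) : edgeOpen ω (src b) (unitVec d b.2) :=
  ⟨b.2, .inl ⟨rfl, hb⟩⟩

theorem edgeOpen_neg_unitVec {b : EdgeIx d} (hb : ω b = true) :
    edgeOpen ω (tgt b) (-unitVec d b.2) :=
  ⟨b.2, .inr ⟨rfl, by simpa [tgt] using hb⟩⟩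

theorem edgeOpen.add_mem_openCluster (h : edgeOpen ω x e) : x + e ∈ openCluster ω x := by
  obtain ⟨i, ⟨rfl, hi⟩ | ⟨rfl, hi⟩⟩ := h
  · exact reachable_of_open hi
  · simpa [cluster, src, tgt, ← sub_eq_add_neg] using
      (reachable_of_open (s := src) (t := tgt) hi).symm

theorem edgeOpen_shift_iff : edgeOpen (shift x ω) 0 e ↔ edgeOpen ω x e := by
  simp [edgeOpen, shift, sub_eq_add_neg, add_comm]

theorem trans_pos_iff : 0 < trans ω x e ↔ edgeOpen ω x e := by
  classical
  unfold trans
  split_ifs with h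
  · have hdeg : 0 < openDeg ω x := Finset.card_pos.2 ⟨e, Finset.mem_filter.2 ⟨h.mem_Ud, h⟩⟩
    simpa [h] using hdeg
  · simp [h]

theorem IsOpenPath.mem_openCluster {γ : ℕ → V d} {n : ℕ} (h : IsOpenPath ω γ n) :
    γ n ∈ openCluster ω (γ 0) := by
  induction n with
  | zero => exact mem_cluster_self
  | succ n ih =>
    have hstep := (h n n.lt_succ_self).2.add_mem_openCluster
    rw [add_sub_cancel] at hstep
    exact (ih fun k hk => h k (by omega)).trans hstep

theorem IsOpenPath.exists_snoc {γ : ℕ → V d} {n : ℕ} (h : IsOpenPath ω γ n)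
    (he : edgeOpen ω (γ n) e) :
    ∃ γ' : ℕ → V d, γ' 0 = γ 0 ∧ IsOpenPath ω γ' (n + 1) ∧ γ' (n + 1) = γ n + e := by
  refine ⟨fun k => if k ≤ n then γ k else γ n + e, by simp, fun k hk => ?_, by simp⟩
  rcases Nat.lt_succ_iff_lt_or_eq.1 hk with hlt | rfl
  · simpa [hlt.le, Nat.succ_le_of_lt hlt] using h k hlt
  · simpa using ⟨he.mem_Ud, he⟩

theorem exists_isOpenPath_of_mem_openCluster (hy : y ∈ openCluster ω x) :
    ∃ (γ : ℕ → V d) (n : ℕ), γ 0 = x ∧ IsOpenPath ω γ n ∧ γ n = y := by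
  have hextend : ∀ {z e}, (∃ (γ : ℕ → V d) (n : ℕ), γ 0 = x ∧ IsOpenPath ω γ n ∧ γ n = z) →
      edgeOpen ω z e → ∃ (γ : ℕ → V d) (n : ℕ), γ 0 = x ∧ IsOpenPath ω γ n ∧ γ n = z + e := by
    rintro z e ⟨γ, n, h0, hγ, rfl⟩ he
    obtain ⟨γ', h0', hγ', hn'⟩ := hγ.exists_snoc he
    exact ⟨γ', n + 1, h0'.trans h0, hγ', hn'⟩
  refine cluster_subset_of_forall_open
    (A := {y | ∃ (γ : ℕ → V d) (n : ℕ), γ 0 = x ∧ IsOpenPath ω γ n ∧ γ n = y})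
    ⟨fun _ => x, 0, rfl, fun k hk => absurd hk k.not_lt_zero, rfl⟩
    (fun b hb => ⟨fun h => ?_, fun h => ?_⟩) hy
  · exact hextend h (edgeOpen_unitVec hb)
  · simpa [src, tgt] using hextend h (edgeOpen_neg_unitVec hb)

theorem memCluster_iff_infinite_openCluster : memCluster ω x ↔ (openCluster ω x).Infinite := by
  constructor
  · intro h hfin
    obtain ⟨R, hR⟩ := exists_subset_box hfin
    obtain ⟨γ, n, rfl, hγ, hn⟩ := h R
    exact hn (inBox_natCast_iff.2 (hR hγ.mem_openCluster))
  · intro h R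
    obtain ⟨y, hy, hyR⟩ := h.exists_notMem_finset (box d R)
    obtain ⟨γ, n, h0, hγ, rfl⟩ := exists_isOpenPath_of_mem_openCluster hy
    exact ⟨γ, n, h0, hγ, fun h => hyR (inBox_natCast_iff.1 h)⟩

theorem measurableSet_cluZero : MeasurableSet (cluZero d) := by
  simp only [cluZero, memCluster_iff_infinite_openCluster]
  exact measurableSet_infinite_cluster src tgt 0

end OpenPaths

section BondLaw

variable {ν : Measure Bool} [IsProbabilityMeasure ν]

/-- The law on the configurations of `ℤ^d` under which the states of the bonds are independent and
distributed according to `ν`. -/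
abbrev bondLaw (d : ℕ) (ν : Measure Bool) [IsProbabilityMeasure ν] : Measure (Config d) :=
  Measure.infinitePi fun _ => ν

theorem IsBernoulli.exists_eq_bondLaw [Nonempty (EdgeIx d)] {p : ℝ} {P : Measure (Config d)}
    (hP : IsBernoulli d p P) :
    ∃ (ν : Measure Bool) (_ : IsProbabilityMeasure ν),
      ν {true} = ENNReal.ofReal p ∧ P = bondLaw d ν := by
  obtain ⟨hprob, hcyl⟩ := hP
  let b₀ : EdgeIx d := Classical.arbitrary _
  have hν : ∀ v, P.map (fun ω => ω b₀) {v} = ENNReal.ofReal (if v then p else 1 - p) := fun v => by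
    rw [Measure.map_apply (measurable_pi_apply b₀) (measurableSet_singleton v)]
    simpa [Set.preimage] using hcyl {b₀} fun _ => v
  have := Measure.isProbabilityMeasure_map (μ := P) (measurable_pi_apply b₀).aemeasurable
  refine ⟨P.map fun ω => ω b₀, this, by simpa using hν true, ?_⟩
  exact infinitePi_eq_of_cylinder_eq fun F a => by simp only [hcyl, hν]

theorem measurePreserving_shift (ν : Measure Bool) [IsProbabilityMeasure ν] (z : V d) :
    MeasurePreserving (shift z) (bondLaw d ν) (bondLaw d ν) :=
  measurePreserving_comp_equiv_infinitePi ν (bondShift z)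

theorem measure_inDistinctInfiniteClusters_bond_eq (ν : Measure Bool) [IsProbabilityMeasure ν]
    (z : V d) (i : Fin d) :
    bondLaw d ν {ω | InDistinctInfiniteClusters src tgt ω (src (z, i)) (tgt (z, i))} =
      bondLaw d ν {ω | InDistinctInfiniteClusters src tgt ω (src (0, i)) (tgt (0, i))} := by
  rw [← (measurePreserving_shift ν z).measure_preimage
    (measurableSet_inDistinctInfiniteClusters _ _ (src (0, i)) _).nullMeasurableSet]
  congr 1
  ext ω
  refine .trans ?_ (inDistinctInfiniteClusters_comp_equiv_iff (src_bondShift z)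
    (tgt_bondShift z)).symm
  simp [src, tgt, add_comm]

theorem mul_measureReal_inDistinctInfiniteClusters_le (ν : Measure Bool) [IsProbabilityMeasure ν]
    (i : Fin d) (n : ℕ) {ε : ℝ} (hε0 : 0 ≤ ε) (hε : ε ≤ 1 / 2) :
    ε * ν.real {true} * ((2 * n + 3) ^ d * (bondLaw d ν).real
        {ω | InDistinctInfiniteClusters src tgt ω (src (0, i)) (tgt (0, i))}) ≤
      6 * ε ^ 2 * (d * (2 * n + 3) ^ d) + ((2 * n + 5) ^ d - (2 * n + 1) ^ d) + 1 := by
  have hcard : (#(box d (n + 1)) : ℝ) = (2 * n + 3) ^ d := by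
    rw [card_box]
    push_cast
    ring
  have hbox : box d (n + 1) ⊆ box d (n + 2) := box_subset_box (by omega)
  have hmem : ∀ x ∈ box d (n + 2), x ∈ box d n ∨ x ∈ box d (n + 2) \ box d n := fun x hx => by
    simpa [hx] using em _
  have hvol := mul_sum_measureReal_inDistinctInfiniteClusters_le (s := src (d := d)) (t := tgt)
    (E := box d (n + 1) ×ˢ Finset.univ) (Λ := box d n) (B := box d (n + 2) \ box d n)
    (fun b hb => Finset.mem_product.2
      ⟨hb.elim (fun h => box_subset_box (by omega) h) src_mem_box, Finset.mem_univ _⟩)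
    (fun b hb => have hsrc := (Finset.mem_product.1 hb).1
      ⟨hmem _ (hbox hsrc), hmem _ (tgt_mem_box hsrc)⟩) ν hε0 hε
  rw [Finset.card_product, Finset.card_univ, Fintype.card_fin, Nat.cast_mul, hcard,
    card_box_sdiff_box, Finset.sum_product] at hvol
  rw [mul_comm (d : ℝ), ← hcard, ← nsmul_eq_mul, ← Finset.sum_const, hcard]
  refine le_trans ?_ hvol
  refine mul_le_mul_of_nonneg_left (Finset.sum_le_sum fun z _ => ?_) (by positivity)
  rw [measureReal_def, ← measure_inDistinctInfiniteClusters_bond_eq ν z i, ← measureReal_def]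
  exact Finset.single_le_sum (f := fun j => (bondLaw d ν).real
    {ω | InDistinctInfiniteClusters src tgt ω (src (z, j)) (tgt (z, j))})
    (fun _ _ => measureReal_nonneg) (Finset.mem_univ i)

theorem tendsto_box_boundary_div_volume (hd : d ≠ 0) :
    Tendsto (fun n : ℕ => (((2 * n + 5 : ℝ) ^ d - (2 * n + 1) ^ d) + 1) / (2 * n + 3) ^ d) atTop
      (𝓝 0) := by
  have hu : Tendsto (fun n : ℕ => (2 * n + 3 : ℝ)⁻¹) atTop (𝓝 0) :=
    tendsto_inv_atTop_zero.comp <| tendsto_atTop_add_const_right _ _ <|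
      tendsto_natCast_atTop_atTop.const_mul_atTop two_pos
  have hcont : Continuous fun u : ℝ => (1 + 2 * u) ^ d - (1 - 2 * u) ^ d + u ^ d := by fun_prop
  have hlim := (hcont.tendsto 0).comp hu
  simp only [mul_zero, add_zero, sub_zero, sub_self, zero_pow hd] at hlim
  refine hlim.congr fun n => ?_
  have hn : (2 * n + 3 : ℝ) ≠ 0 := by positivity
  have hplus : 1 + 2 * (2 * n + 3 : ℝ)⁻¹ = (2 * n + 5) / (2 * n + 3) := by field_simp; ring
  have hminus : 1 - 2 * (2 * n + 3 : ℝ)⁻¹ = (2 * n + 1) / (2 * n + 3) := by field_simp; ring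
  rw [Function.comp_apply, hplus, hminus, div_pow, div_pow, inv_pow]
  ring

theorem measure_inDistinctInfiniteClusters_bond_eq_zero (hν : ν {true} ≠ 0) (b : EdgeIx d) :
    bondLaw d ν {ω | InDistinctInfiniteClusters src tgt ω (src b) (tgt b)} = 0 := by
  obtain ⟨z, i⟩ := b
  rw [measure_inDistinctInfiniteClusters_bond_eq, ← measureReal_eq_zero_iff]
  set D := (bondLaw d ν).real
    {ω | InDistinctInfiniteClusters src tgt ω (src (0, i)) (tgt (0, i))}
  have hp : 0 < ν.real {true} := ENNReal.toReal_pos hν (measure_ne_top ν _)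
  have hlarge : ∀ ε, 0 < ε → ε ≤ 1 / 2 → ν.real {true} * D ≤ 6 * ε * d := fun ε hε0 hε => by
    have hbound : ε * ν.real {true} * D ≤ 6 * ε ^ 2 * d := by
      have hlim := (tendsto_box_boundary_div_volume i.pos.ne').const_add (6 * ε ^ 2 * d)
      rw [add_zero] at hlim
      refine ge_of_tendsto' hlim fun n => ?_
      have hvol : (0 : ℝ) < (2 * n + 3) ^ d := by positivity
      rw [← sub_le_iff_le_add', le_div_iff₀ hvol]
      linarith [mul_measureReal_inDistinctInfiniteClusters_le ν i n hε0.le hε]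
    exact le_of_mul_le_mul_left (by linarith) hε0
  have hsmall : ν.real {true} * D ≤ 0 := by
    have hlim : Tendsto (fun ε : ℝ => 6 * ε * d) (𝓝[>] 0) (𝓝 0) := by
      have hcont : Continuous fun ε : ℝ => 6 * ε * d := by fun_prop
      simpa using (hcont.tendsto 0).mono_left nhdsWithin_le_nhds
    refine ge_of_tendsto hlim ?_
    filter_upwards [Ioc_mem_nhdsGT (show (0 : ℝ) < 1 / 2 by norm_num)] with ε hε
    exact hlarge ε hε.1 hε.2
  exact le_antisymm (nonpos_of_mul_nonpos_right hsmall hp) measureReal_nonneg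

theorem ae_openCluster_eq_of_infinite (hν : ν {true} ≠ 0) :
    ∀ᵐ ω ∂bondLaw d ν, ∀ x y, (openCluster ω x).Infinite → (openCluster ω y).Infinite →
      openCluster ω x = openCluster ω y := by
  classical
  have hindep : iIndepFun (fun b (ω : Config d) => ω b) (bondLaw d ν) :=
    iIndepFun_infinitePi (P := fun _ => ν) (X := fun _ v => v) fun _ => measurable_id
  refine ae_cluster_eq_of_infinite preconnected_openGraph_true (fun b => ?_) fun b => ?_
  · refine quasiMeasurePreserving_update hindep ?_
    have heval := (measurePreserving_eval_infinitePi (fun _ : EdgeIx d => ν) b).measure_preimage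
      (measurableSet_singleton true).nullMeasurableSet
    exact heval.trans_ne hν
  · have hnull := measure_inDistinctInfiniteClusters_bond_eq_zero hν b
    filter_upwards [measure_eq_zero_iff_ae_notMem.1 hnull] with ω hω hs ht
    by_contra hne
    exact hω ⟨hs, ht, hne⟩

theorem bondLaw_eq_zero_or_one_of_shift_preimage_eq [Infinite (V d)] {B : Set (Config d)}
    (hB : MeasurableSet B) (hinv : ∀ z, shift z ⁻¹' B = B) :
    bondLaw d ν B = 0 ∨ bondLaw d ν B = 1 := by
  classical
  refine infinitePi_eq_zero_or_one_of_comp_equiv_preimage_eq ν hB fun F => ?_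
  obtain ⟨z, hz⟩ := Infinite.exists_notMem_finset ((F ×ˢ F).image fun c => c.1.1 - c.2.1)
  refine ⟨bondShift z, Finset.disjoint_left.2 fun b hb hbz => hz ?_, hinv z⟩
  obtain ⟨c, hc, rfl⟩ := Finset.mem_image.1 hbz
  exact Finset.mem_image.2 ⟨(bondShift z c, c), Finset.mk_mem_product hb hc, by simp [bondShift]⟩

end BondLaw

section Ergodicity

theorem ae_cond_iff {Ω : Type*} [MeasurableSpace Ω] {P : Measure Ω} [IsFiniteMeasure P] {s : Set Ω}
    (hs : MeasurableSet s) {q : Ω → Prop} : (∀ᵐ ω ∂P[|s], q ω) ↔ ∀ᵐ ω ∂P, ω ∈ s → q ω := by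
  rw [ProbabilityTheory.cond, Measure.ae_ennreal_smul_measure_iff
    (ENNReal.inv_ne_zero.2 (measure_ne_top _ _)), ae_restrict_iff' hs]

theorem shift_mem_of_mem_openCluster {A : Set (Config d)}
    (hA : ∀ z ∈ openCluster ω x, shift z ω ∈ A → ∀ e, edgeOpen ω z e → shift (z + e) ω ∈ A)
    (hx : shift x ω ∈ A) (hy : y ∈ openCluster ω x) : shift y ω ∈ A := by
  have hstep : ∀ {z e}, z ∈ openCluster ω x ∧ shift z ω ∈ A → edgeOpen ω z e →
      z + e ∈ openCluster ω x ∧ shift (z + e) ω ∈ A := fun {z e} hz he =>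
    ⟨hz.1.trans he.add_mem_openCluster, hA z hz.1 hz.2 e he⟩
  refine (cluster_subset_of_forall_open (A := {z | z ∈ openCluster ω x ∧ shift z ω ∈ A})
    ⟨mem_cluster_self, hx⟩ (fun b hb => ⟨fun h => hstep h (edgeOpen_unitVec hb), fun h => ?_⟩) hy).2
  simpa [src, tgt] using hstep h (edgeOpen_neg_unitVec hb)

/-- The event that the environment `ω` seen from some vertex of an infinite cluster lies in `A`. -/
def seenFromInfinity (A : Set (Config d)) : Set (Config d) :=
  {ω | ∃ x, (openCluster ω x).Infinite ∧ shift x ω ∈ A}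

theorem measurableSet_seenFromInfinity {A : Set (Config d)} (hA : MeasurableSet A) :
    MeasurableSet (seenFromInfinity A) := by
  have hshift : ∀ x : V d, Measurable (shift x) := fun x =>
    measurable_pi_lambda _ fun _ => measurable_pi_apply _
  simp only [seenFromInfinity, Set.ofPred_exists]
  exact .iUnion fun x => (measurableSet_infinite_cluster src tgt x).inter (hshift x hA)

theorem shift_preimage_seenFromInfinity (A : Set (Config d)) (z : V d) :
    shift z ⁻¹' seenFromInfinity A = seenFromInfinity A := by
  ext ω
  simp only [seenFromInfinity, Set.mem_preimage, Set.mem_ofPred_eq, infinite_openCluster_shift_iff,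
    shift_shift]
  exact (Equiv.addRight z).exists_congr_left.trans (by simp)

theorem ae_cond_mem_of_edgeOpen_closed [Infinite (V d)] {ν : Measure Bool} [IsProbabilityMeasure ν]
    (hν : ν {true} ≠ 0) {A : Set (Config d)} (hA : MeasurableSet A)
    (hA0 : (bondLaw d ν)[|cluZero d] A ≠ 0)
    (hclosed : ∀ᵐ ω ∂(bondLaw d ν)[|cluZero d], ω ∈ A → ∀ e, edgeOpen ω 0 e → shift e ω ∈ A) :
    ∀ᵐ ω ∂(bondLaw d ν)[|cluZero d], ω ∈ A := by
  have hseen : ∀ᵐ ω ∂bondLaw d ν, ω ∈ seenFromInfinity A := by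
    refine (mem_ae_iff_prob_eq_one (measurableSet_seenFromInfinity hA)).2 <|
      (bondLaw_eq_zero_or_one_of_shift_preimage_eq (measurableSet_seenFromInfinity hA)
        (shift_preimage_seenFromInfinity A)).resolve_left fun h0 => hA0 ?_
    rw [measure_eq_zero_iff_ae_notMem, ae_cond_iff measurableSet_cluZero]
    filter_upwards [measure_eq_zero_iff_ae_notMem.1 h0] with ω hω h0 hωA
    exact hω ⟨0, memCluster_iff_infinite_openCluster.1 h0, by rwa [shift_zero]⟩
  have hclosed_everywhere : ∀ᵐ ω ∂bondLaw d ν, ∀ x, (openCluster ω x).Infinite →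
      shift x ω ∈ A → ∀ e, edgeOpen ω x e → shift (x + e) ω ∈ A := by
    refine ae_all_iff.2 fun x => ?_
    filter_upwards [(measurePreserving_shift ν x).quasiMeasurePreserving.ae
      ((ae_cond_iff measurableSet_cluZero).1 hclosed)] with ω hω hinf hx e he
    have hshift := hω (memCluster_iff_infinite_openCluster.2
      (infinite_openCluster_shift_iff.2 (by rwa [zero_add]))) hx e (edgeOpen_shift_iff.2 he)
    rwa [shift_shift, add_comm] at hshift
  rw [ae_cond_iff measurableSet_cluZero]
  filter_upwards [hseen, hclosed_everywhere, ae_openCluster_eq_of_infinite hν]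
    with ω ⟨x, hxinf, hx⟩ hω huniq h0
  have h0x := cluster_eq_iff.1 (huniq x 0 hxinf (memCluster_iff_infinite_openCluster.1 h0))
  rw [← shift_zero ω]
  refine shift_mem_of_mem_openCluster (fun z hz => hω z ?_) hx h0x
  rwa [openCluster, ← cluster_eq_iff.2 hz]

theorem nonempty_fin_of_memCluster (h : memCluster ω x) : Nonempty (Fin d) := by
  obtain ⟨γ, n, -, -, hn⟩ := h 0
  exact ⟨(not_forall.1 hn).choose⟩

theorem IsBernoulli.ae_cond_mem_of_trans_closed {p : ℝ} {P : Measure (Config d)}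
    (hP : IsBernoulli d p P) (hp0 : 0 < p) {A : Set (Config d)} (hA : MeasurableSet A)
    (hA0 : P[|cluZero d] A ≠ 0)
    (hclosed : ∀ᵐ ω ∂P[|cluZero d], ω ∈ A →
      ∀ e : Step d, 0 < trans ω 0 e.1 → shift e.1 ω ∈ A) :
    ∀ᵐ ω ∂P[|cluZero d], ω ∈ A := by
  have hC : P (cluZero d) ≠ 0 := fun h => hA0 (by simp [cond_eq_zero_of_meas_eq_zero h])
  obtain ⟨ω, hω⟩ := nonempty_of_measure_ne_zero hC
  have := nonempty_fin_of_memCluster hω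
  have : Infinite (V d) := inferInstanceAs (Infinite (Fin d → ℤ))
  have : Nonempty (EdgeIx d) := inferInstanceAs (Nonempty ((Fin d → ℤ) × Fin d))
  obtain ⟨ν, _, hν, rfl⟩ := hP.exists_eq_bondLaw
  refine ae_cond_mem_of_edgeOpen_closed (hν.trans_ne (ENNReal.ofReal_pos.2 hp0).ne') hA hA0 ?_
  filter_upwards [hclosed] with ω hω hmem e he
  exact hω hmem ⟨e, he.mem_Ud⟩ (trans_pos_iff.2 he)

end Ergodicity

section InvariantMeasures

variable {κ : Config d → Step d → ℝ} {P₀ Q : Measure (Config d)}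

theorem IsInvariant.ae_shift_mem [IsFiniteMeasure Q] (hQ : IsInvariant κ Q)
    (hmeas : ∀ e, Measurable fun ω => κ ω e) (hnonneg : ∀ ω e, 0 ≤ κ ω e)
    (hle : ∀ e, ∀ᵐ ω ∂Q, κ ω e ≤ 1) {A : Set (Config d)} (hA : MeasurableSet A)
    (hQA : ∀ᵐ ω ∂Q, ω ∈ A) : ∀ᵐ ω ∂Q, ∀ e, 0 < κ ω e → shift e.1 ω ∈ A := by
  set f : Config d → ℝ := Aᶜ.indicator 1
  have hf : Measurable f := measurable_one.indicator hA.compl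
  have hf0 : ∀ ω, 0 ≤ f ω := Set.indicator_nonneg fun _ _ => zero_le_one
  have hf1 : ∀ ω, f ω ≤ 1 := Set.indicator_le_self' fun _ _ => zero_le_one
  have hterm : ∀ ω e, 0 ≤ κ ω e * f (shift e.1 ω) := fun ω e => mul_nonneg (hnonneg ω e) (hf0 _)
  have hint : Integrable (kernelStep κ f) Q := by
    refine integrable_finsetSum _ fun e _ =>
      .of_bound ((hmeas e).mul (hf.comp ?_)).aestronglyMeasurable 1 ?_
    · exact measurable_pi_lambda _ fun _ => measurable_pi_apply _
    · filter_upwards [hle e] with ω hω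
      rw [Real.norm_of_nonneg (hterm ω e)]
      exact mul_le_one₀ hω (hf0 _) (hf1 _)
  have hzero : ∫ ω, kernelStep κ f ω ∂Q = 0 := by
    rw [hQ f hf ⟨1, fun ω => abs_le.2 ⟨by linarith [hf0 ω], hf1 ω⟩⟩]
    refine integral_eq_zero_of_ae ?_
    filter_upwards [hQA] with ω hω using by simp [f, hω]
  filter_upwards [(integral_eq_zero_iff_of_nonneg
    (fun ω => Finset.sum_nonneg fun e _ => hterm ω e) hint).1 hzero] with ω hω e he
  by_contra hmem
  have he0 := (Finset.sum_eq_zero_iff_of_nonneg fun e _ => hterm ω e).1 hω e (Finset.mem_univ e)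
  simp [f, hmem, he.ne'] at he0

theorem IsInvariant.ae_rnDeriv_shift_pos [SigmaFinite P₀] [IsFiniteMeasure Q]
    (hQ : IsInvariant κ Q) (hac : Q ≪ P₀) (hmeas : ∀ e, Measurable fun ω => κ ω e)
    (hnonneg : ∀ ω e, 0 ≤ κ ω e) (hle : ∀ e, ∀ᵐ ω ∂P₀, κ ω e ≤ 1) :
    ∀ᵐ ω ∂P₀, 0 < Q.rnDeriv P₀ ω → ∀ e, 0 < κ ω e → 0 < Q.rnDeriv P₀ (shift e.1 ω) := by
  have hdens := Measure.measurable_rnDeriv Q P₀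
  have hstep := hQ.ae_shift_mem hmeas hnonneg (fun e => hac.ae_le (hle e))
    (measurableSet_lt measurable_const hdens) (Measure.rnDeriv_pos hac)
  rw [← Measure.withDensity_rnDeriv_eq Q P₀ hac, ae_withDensity_iff hdens,
    Measure.withDensity_rnDeriv_eq Q P₀ hac] at hstep
  filter_upwards [hstep] with ω hω hpos using hω hpos.ne'

theorem measure_rnDeriv_pos_ne_zero {Ω : Type*} [MeasurableSpace Ω] {μ ν : Measure Ω} [NeZero μ]
    [SFinite μ] [SigmaFinite ν] (hac : μ ≪ ν) : ν {ω | 0 < μ.rnDeriv ν ω} ≠ 0 := fun h => by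
  obtain ⟨ω, hω, hω'⟩ := ((Measure.rnDeriv_pos hac).and
    (measure_eq_zero_iff_ae_notMem.1 (hac h))).exists
  exact hω' hω

theorem absolutelyContinuous_of_ae_rnDeriv_pos {Ω : Type*} [MeasurableSpace Ω] {μ ν : Measure Ω}
    [SigmaFinite μ] [SigmaFinite ν] (hac : μ ≪ ν) (hpos : ∀ᵐ ω ∂ν, 0 < μ.rnDeriv ν ω) : ν ≪ μ := by
  have h := withDensity_absolutelyContinuous' (Measure.measurable_rnDeriv μ ν).aemeasurable
    (hpos.mono fun _ h => h.ne')
  rwa [Measure.withDensity_rnDeriv_eq _ _ hac] at h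

end InvariantMeasures

end SRWPC

open SRWPC in
theorem invariant_measure_equivalent_general {d : ℕ} {p : ℝ} (hp0 : 0 < p)
    {P : Measure (Config d)} (hP : IsBernoulli d p P) {κ : Config d → Step d → ℝ}
    (hmeas : ∀ e, Measurable fun ω => κ ω e) (hnonneg : ∀ ω e, 0 ≤ κ ω e)
    (hle : ∀ e, ∀ᵐ ω ∂P[|cluZero d], κ ω e ≤ 1)
    (hpos : ∀ e, ∀ᵐ ω ∂P[|cluZero d], 0 < trans ω 0 e.1 → 0 < κ ω e)
    {Q : Measure (Config d)} [IsProbabilityMeasure Q] (hQac : Q ≪ P[|cluZero d])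
    (hQinv : IsInvariant κ Q) :
    (∀ᵐ ω ∂((P[|cluZero d])[|{ω' | 0 < Q.rnDeriv (P[|cluZero d]) ω'}]),
      ∀ e : Step d, 0 < trans ω 0 e.1 →
        0 < Q.rnDeriv (P[|cluZero d]) (shift e.1 ω)) ∧
    (P[|cluZero d]) {ω' | 0 < Q.rnDeriv (P[|cluZero d]) ω'} = 1 ∧
    (P[|cluZero d]) ≪ Q := by
  have := hP.1
  set P₀ := P[|cluZero d] with hP₀
  have : IsProbabilityMeasure P₀ := cond_isProbabilityMeasure fun h => by
    rw [hP₀, cond_eq_zero_of_meas_eq_zero h, Measure.absolutelyContinuous_zero_iff] at hQac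
    exact IsProbabilityMeasure.ne_zero Q hQac
  set A := {ω | 0 < Q.rnDeriv P₀ ω}
  have hA : MeasurableSet A := measurableSet_lt measurable_const (Measure.measurable_rnDeriv _ _)
  have hA0 : P₀ A ≠ 0 := measure_rnDeriv_pos_ne_zero hQac
  have hclosed : ∀ᵐ ω ∂P₀, ω ∈ A → ∀ e : Step d, 0 < trans ω 0 e.1 → shift e.1 ω ∈ A := by
    filter_upwards [hQinv.ae_rnDeriv_shift_pos hQac hmeas hnonneg hle, ae_all_iff.2 hpos]
      with ω hω hκ hmem e he using hω hmem e (hκ e he)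
  have hfull : ∀ᵐ ω ∂P₀, ω ∈ A := hP.ae_cond_mem_of_trans_closed hp0 hA hA0 hclosed
  refine ⟨cond_absolutelyContinuous.ae_le ?_, (mem_ae_iff_prob_eq_one hA).1 hfull,
    absolutelyContinuous_of_ae_rnDeriv_pos hQac hfull⟩
  filter_upwards [hclosed, hfull] with ω hω hmem using hω hmem

open SRWPC in
/-- **Equivalence of invariant measures with the conditional percolation law**
(Step 1 in the proof of Theorem 3.2). -/
theorem invariant_measure_equivalent
    (d : ℕ) (hd : 2 ≤ d) (p : ℝ) (hp0 : 0 < p) (hp1 : p < 1) (hpc : pc d < p)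
    (P : Measure (Config d)) (hP : IsBernoulli d p P)
    (κ : Config d → Step d → ℝ) (hκ : κ ∈ PiT d (P[|cluZero d]))
    (Q : Measure (Config d)) (hQprob : IsProbabilityMeasure Q)
    (hQac : Q ≪ (P[|cluZero d])) (hQinv : IsInvariant κ Q) :
    (∀ᵐ ω ∂((P[|cluZero d])[|{ω' | 0 < Q.rnDeriv (P[|cluZero d]) ω'}]),
      ∀ e : Step d, 0 < trans ω 0 e.1 →
        0 < Q.rnDeriv (P[|cluZero d]) (shift e.1 ω)) ∧
    (P[|cluZero d]) {ω' | 0 < Q.rnDeriv (P[|cluZero d]) ω'} = 1 ∧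
    (P[|cluZero d]) ≪ Q := by
  obtain ⟨hmeas, hnonneg, hle, -, hzero⟩ := hκ
  exact invariant_measure_equivalent_general hp0 hP hmeas hnonneg hle (fun e => (hzero e).mono
    fun ω h he => (hnonneg ω e).lt_of_ne' (mt h.1 he.ne')) hQac hQinv
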